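/- arXiv:1103.3401 — 4 statements merged into one kernel-verified Lean document; each statement's English description precedes it below -/
import Mathlib

section
/- Let (X,d) be a proper complete separable metric space with base point x0, let 1 <= p < infinity, and let f: X -> X be continuous. Then the pushforward f_* maps P_p(X) into itself and is continuous as a map (P_p(X), w_p) -> (P_p(X), w_p) if and only if sup over x in X of d(f(x), x0) / (1 + d(x, x0)) is finite. -/
open MeasureTheory Topology Filter Metric Set
open scoped ENNReal NNReal

noncomputable section

variable {X : Type*}

/-- `π` is a coupling of `μ` and `ν`, i.e. a measure on `X × X` with marginals `μ` and `ν`. -/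
def IsCoupling [MeasurableSpace X] (π : Measure (X × X)) (μ ν : Measure X) : Prop :=
  π.map Prod.fst = μ ∧ π.map Prod.snd = ν

/-- The `p`-th power optimal transport cost between `μ` and `ν`. -/
def wCost [MetricSpace X] [MeasurableSpace X] (p : ℝ) (μ ν : Measure X) : ℝ≥0∞ :=
  ⨅ π ∈ {π : Measure (X × X) | IsProbabilityMeasure π ∧ IsCoupling π μ ν},
    ∫⁻ q, ENNReal.ofReal (dist q.1 q.2 ^ p) ∂π

/-- The Wasserstein distance of order `p` (the `p`-th root of the optimal cost), as a real
number. -/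
def Wp [MetricSpace X] [MeasurableSpace X] (p : ℝ) (μ ν : Measure X) : ℝ :=
  ((wCost p μ ν) ^ (1 / p)).toReal

/-- `μ` has finite `p`-th moment about the base point `x₀`. -/
def FiniteMoment [MetricSpace X] [MeasurableSpace X] (p : ℝ) (x₀ : X) (μ : Measure X) : Prop :=
  ∫⁻ x, ENNReal.ofReal (dist x₀ x ^ p) ∂μ < ⊤

/-- The Wasserstein space `P_p(X)`: Borel probability measures with finite `p`-th moment. -/
def Pp [MetricSpace X] [MeasurableSpace X] (p : ℝ) (x₀ : X) : Set (Measure X) :=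
  {μ | IsProbabilityMeasure μ ∧ FiniteMoment p x₀ μ}

/-- The convex combination `t • μ + (1 - t) • ν` of two measures. -/
def mix [MeasurableSpace X] (t : ℝ) (μ ν : Measure X) : Measure X :=
  ENNReal.ofReal t • μ + ENNReal.ofReal (1 - t) • ν

/-- `μₙ → μ` in the weak topology: integrals of bounded continuous functions converge. -/
def WeakConv [MeasurableSpace X] [TopologicalSpace X] (μs : ℕ → Measure X) (μ : Measure X) :
    Prop :=
  ∀ g : BoundedContinuousFunction X ℝ,
    Tendsto (fun n => ∫ x, g x ∂(μs n)) atTop (𝓝 (∫ x, g x ∂μ))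

/-- `μₙ → μ` with respect to the Wasserstein distance of order `p`. -/
def WpTendsto [MetricSpace X] [MeasurableSpace X] (p : ℝ) (μs : ℕ → Measure X)
    (μ : Measure X) : Prop :=
  Tendsto (fun n => Wp p (μs n) μ) atTop (𝓝 0)

/-- A set of measures is sequentially compact for the Wasserstein distance of order `p`. -/
def WpSeqCompact [MetricSpace X] [MeasurableSpace X] (p : ℝ) (S : Set (Measure X)) : Prop :=
  ∀ μs : ℕ → Measure X, (∀ n, μs n ∈ S) →
    ∃ μ ∈ S, ∃ φ : ℕ → ℕ, StrictMono φ ∧ WpTendsto p (fun n => μs (φ n)) μ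

/-- A set of measures is sequentially compact for the weak topology. -/
def WeakSeqCompact [MeasurableSpace X] [TopologicalSpace X] (S : Set (Measure X)) : Prop :=
  ∀ μs : ℕ → Measure X, (∀ n, μs n ∈ S) →
    ∃ μ ∈ S, ∃ φ : ℕ → ℕ, StrictMono φ ∧ WeakConv (fun n => μs (φ n)) μ

theorem aux_add_rpow {p a b : ℝ} (hp : 1 ≤ p) (ha : 0 ≤ a) (hb : 0 ≤ b) :
    (a + b) ^ p ≤ 2 ^ p * (a ^ p + b ^ p) := by
  have hp0 : 0 ≤ p := by linarith
  have h1 : (a + b) ^ p ≤ (2 * max a b) ^ p := by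
    apply Real.rpow_le_rpow (by positivity) _ hp0
    linarith [le_max_left a b, le_max_right a b]
  rw [Real.mul_rpow (by norm_num) (le_max_of_le_left ha)] at h1
  refine h1.trans ?_
  gcongr
  have h2 := Real.rpow_nonneg ha p
  have h3 := Real.rpow_nonneg hb p
  rcases max_cases a b with h | h <;> rw [h.1] <;> linarith

theorem aux_pointwise [MetricSpace X] [ProperSpace X] {p : ℝ} (hp : 1 ≤ p) (x₀ : X) {f : X → X}
    (hf : Continuous f) {M : ℝ} (hM0 : 0 ≤ M) (hM : ∀ x, dist (f x) x₀ ≤ M * (1 + dist x x₀))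
    {ε R : ℝ} (hε : 0 < ε) (hR : 0 ≤ R) :
    ∃ K : ℝ, 0 ≤ K ∧ ∀ x y : X, dist (f x) (f y) ^ p ≤
      ε + {y : X | R < dist y x₀}.indicator (fun y => (4 * M) ^ p * (1 + dist y x₀) ^ p) y
        + K * dist x y ^ p := by
  have hp0 : 0 < p := by linarith
  have huc := (isCompact_closedBall x₀ (R + 1)).uniformContinuousOn_of_continuous hf.continuousOn
  rw [Metric.uniformContinuousOn_iff] at huc
  obtain ⟨δ₀, hδ₀, hδ⟩ := huc (ε ^ (1 / p)) (by positivity)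
  set δ := min δ₀ 1 with hδdef
  have hδpos : 0 < δ := lt_min hδ₀ one_pos
  have hgen : ∀ x y : X, dist (f x) (f y) ^ p ≤
      (4 * M) ^ p * (dist x y ^ p + (1 + dist y x₀) ^ p) := by
    intro x y
    have h1 : dist (f x) (f y) ≤ (2 * M) * (dist x y + (1 + dist y x₀)) := by
      have t1 := dist_triangle_right (f x) (f y) x₀
      have t2 := dist_triangle x y x₀
      have t3 : M * dist x x₀ ≤ M * (dist x y + dist y x₀) := by gcongr
      have t4 : 0 ≤ M * dist x y := by positivity
      nlinarith [hM x, hM y]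
    calc dist (f x) (f y) ^ p ≤ ((2 * M) * (dist x y + (1 + dist y x₀))) ^ p :=
          Real.rpow_le_rpow dist_nonneg h1 hp0.le
      _ = (2 * M) ^ p * (dist x y + (1 + dist y x₀)) ^ p :=
          Real.mul_rpow (by positivity) (by positivity)
      _ ≤ (2 * M) ^ p * (2 ^ p * (dist x y ^ p + (1 + dist y x₀) ^ p)) := by
          gcongr
          exact aux_add_rpow hp dist_nonneg (by positivity)
      _ = (4 * M) ^ p * (dist x y ^ p + (1 + dist y x₀) ^ p) := by
          rw [← mul_assoc, ← Real.mul_rpow (by positivity) (by positivity)]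
          ring_nf
  refine ⟨(4 * M) ^ p * (1 + (1 + R) ^ p / δ ^ p), by positivity, fun x y => ?_⟩
  have hdp : 0 ≤ dist x y ^ p := by positivity
  have hC : 0 ≤ (4 * M) ^ p := by positivity
  have hq : 0 ≤ (1 + R) ^ p / δ ^ p := by positivity
  by_cases hy : R < dist y x₀
  · rw [Set.indicator_of_mem (by exact hy)]
    have := hgen x y
    have h3 : 0 ≤ (4 * M) ^ p * ((1 + R) ^ p / δ ^ p) * dist x y ^ p := by positivity
    nlinarith
  · rw [Set.indicator_of_notMem (by exact hy)]
    rw [not_lt] at hy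
    by_cases hxy : dist x y < δ
    · have hlt : dist (f x) (f y) < ε ^ (1 / p) := by
        apply hδ x _ y _ (hxy.trans_le (min_le_left _ _))
        · rw [Metric.mem_closedBall]
          have := min_le_right δ₀ 1
          linarith [dist_triangle x y x₀]
        · rw [Metric.mem_closedBall]; linarith
      have h4 : dist (f x) (f y) ^ p ≤ ε := by
        calc _ ≤ (ε ^ (1 / p)) ^ p := Real.rpow_le_rpow dist_nonneg hlt.le hp0.le
          _ = ε := by rw [← Real.rpow_mul hε.le, one_div_mul_cancel hp0.ne', Real.rpow_one]
      have : 0 ≤ (4 * M) ^ p * (1 + (1 + R) ^ p / δ ^ p) * dist x y ^ p := by positivity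
      linarith
    · rw [not_lt] at hxy
      have h5 : (1 + dist y x₀) ^ p ≤ (1 + R) ^ p / δ ^ p * dist x y ^ p := by
        calc (1 + dist y x₀) ^ p ≤ (1 + R) ^ p :=
              Real.rpow_le_rpow (by positivity) (by linarith) hp0.le
          _ = (1 + R) ^ p / δ ^ p * δ ^ p := by field_simp
          _ ≤ _ := by gcongr
      have := hgen x y
      have h6 := mul_le_mul_of_nonneg_left h5 hC
      nlinarith

section
variable [MetricSpace X] [MeasurableSpace X] [BorelSpace X]
  [SecondCountableTopology X]

theorem aux_meas (p : ℝ) (hp : 1 ≤ p) :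
    Measurable (fun q : X × X => ENNReal.ofReal (dist q.1 q.2 ^ p)) := by
  have hp0 : 0 ≤ p := by linarith
  have : Continuous (fun q : X × X => dist q.1 q.2 ^ p) :=
    (continuous_dist).rpow_const (fun _ => Or.inr hp0)
  exact this.measurable.ennreal_ofReal

theorem aux_meas1 (p : ℝ) (hp : 1 ≤ p) (x₀ : X) :
    Measurable (fun x : X => ENNReal.ofReal (dist x₀ x ^ p)) :=
  (aux_meas p hp).comp measurable_prodMk_left

theorem aux_cost_lt_top {p : ℝ} (hp : 1 ≤ p) {x₀ : X} {μ ν : Measure X}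
    (hμ : μ ∈ Pp p x₀) (hν : ν ∈ Pp p x₀) : wCost p μ ν < ⊤ := by
  have hp0 : 0 ≤ p := by linarith
  obtain ⟨hμ1, hμ2⟩ := hμ
  obtain ⟨hν1, hν2⟩ := hν
  have hc : IsProbabilityMeasure (μ.prod ν) ∧ IsCoupling (μ.prod ν) μ ν :=
    ⟨inferInstance, by rw [Measure.map_fst_prod]; simp, by rw [Measure.map_snd_prod]; simp⟩
  refine lt_of_le_of_lt (iInf₂_le (μ.prod ν) hc) ?_
  have hb : ∀ q : X × X, ENNReal.ofReal (dist q.1 q.2 ^ p) ≤ ENNReal.ofReal (2 ^ p) *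
      (ENNReal.ofReal (dist x₀ q.1 ^ p) + ENNReal.ofReal (dist x₀ q.2 ^ p)) := by
    intro q
    rw [← ENNReal.ofReal_add (by positivity) (by positivity),
      ← ENNReal.ofReal_mul (by positivity)]
    apply ENNReal.ofReal_le_ofReal
    refine le_trans ?_ (aux_add_rpow hp dist_nonneg dist_nonneg)
    exact Real.rpow_le_rpow dist_nonneg (dist_triangle_left _ _ _) hp0
  refine lt_of_le_of_lt (lintegral_mono hb) ?_
  have m1 : Measurable (fun q : X × X => ENNReal.ofReal (dist x₀ q.1 ^ p)) :=
    (aux_meas1 p hp x₀).comp measurable_fst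
  have m2 : Measurable (fun q : X × X => ENNReal.ofReal (dist x₀ q.2 ^ p)) :=
    (aux_meas1 p hp x₀).comp measurable_snd
  rw [lintegral_const_mul' _ _ ENNReal.ofReal_ne_top, lintegral_add_left m1,
    ← lintegral_map (aux_meas1 p hp x₀) measurable_fst,
    ← lintegral_map (aux_meas1 p hp x₀) measurable_snd, hc.2.1, hc.2.2]
  exact ENNReal.mul_lt_top ENNReal.ofReal_lt_top (ENNReal.add_lt_top.2 ⟨hμ2, hν2⟩)

theorem aux_tendsto_iff {p : ℝ} (hp : 1 ≤ p) {x₀ : X} {μs : ℕ → Measure X} {μ : Measure X}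
    (hμs : ∀ n, μs n ∈ Pp p x₀) (hμ : μ ∈ Pp p x₀) :
    WpTendsto p μs μ ↔ Tendsto (fun n => wCost p (μs n) μ) atTop (𝓝 0) := by
  have hp0 : 0 < p := by linarith
  constructor
  · intro h
    have h1 : ∀ n, wCost p (μs n) μ = (ENNReal.ofReal (Wp p (μs n) μ)) ^ p := by
      intro n
      have hlt := aux_cost_lt_top hp (hμs n) hμ
      rw [Wp, ENNReal.ofReal_toReal, ← ENNReal.rpow_mul, one_div_mul_cancel hp0.ne',
        ENNReal.rpow_one]
      exact ENNReal.rpow_ne_top_of_nonneg (by positivity) hlt.ne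
    simp_rw [h1]
    have h2 := (ENNReal.continuous_rpow_const (y := p)).tendsto (0 : ℝ≥0∞)
    rw [ENNReal.zero_rpow_of_pos hp0] at h2
    refine h2.comp ?_
    have h3 := ENNReal.tendsto_ofReal h
    simpa using h3
  · intro h
    have h2 := (ENNReal.continuous_rpow_const (y := 1 / p)).tendsto (0 : ℝ≥0∞)
    rw [ENNReal.zero_rpow_of_pos (by positivity)] at h2
    have h3 := (ENNReal.tendsto_toReal ENNReal.zero_ne_top).comp (h2.comp h)
    simpa [WpTendsto, Wp, Function.comp_def] using h3

theorem aux_growth_lt_top {p : ℝ} (hp : 1 ≤ p) {x₀ : X} {μ : Measure X} (hμ : μ ∈ Pp p x₀)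
    {C : ℝ} (hC : 0 ≤ C) :
    ∫⁻ y, ENNReal.ofReal (C * (1 + dist y x₀) ^ p) ∂μ < ⊤ := by
  have hμ1 := hμ.1
  have hb : ∀ y : X, ENNReal.ofReal (C * (1 + dist y x₀) ^ p) ≤ ENNReal.ofReal (C * 2 ^ p) *
      (1 + ENNReal.ofReal (dist x₀ y ^ p)) := by
    intro q
    rw [← ENNReal.ofReal_one, ← ENNReal.ofReal_add (by positivity) (by positivity),
      ← ENNReal.ofReal_mul (by positivity)]
    apply ENNReal.ofReal_le_ofReal
    rw [mul_assoc]
    gcongr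
    have := aux_add_rpow hp zero_le_one (dist_nonneg (x := q) (y := x₀))
    rw [Real.one_rpow] at this
    rwa [dist_comm x₀ q]
  refine lt_of_le_of_lt (lintegral_mono hb) ?_
  rw [lintegral_const_mul' _ _ ENNReal.ofReal_ne_top,
    lintegral_add_left measurable_const]
  refine ENNReal.mul_lt_top ENNReal.ofReal_lt_top (ENNReal.add_lt_top.2 ⟨?_, hμ.2⟩)
  simp

theorem aux_maps {p : ℝ} (hp : 1 ≤ p) {x₀ : X} {f : X → X} (hf : Continuous f) {M : ℝ}
    (hM0 : 0 ≤ M) (hM : ∀ x, dist (f x) x₀ ≤ M * (1 + dist x x₀)) {μ : Measure X}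
    (hμ : μ ∈ Pp p x₀) : μ.map f ∈ Pp p x₀ := by
  have hμ1 := hμ.1
  refine ⟨Measure.isProbabilityMeasure_map hf.measurable.aemeasurable, ?_⟩
  rw [FiniteMoment, lintegral_map (aux_meas1 p hp x₀) hf.measurable]
  refine lt_of_le_of_lt (lintegral_mono fun x => ?_)
    (aux_growth_lt_top hp hμ (C := M ^ p) (by positivity))
  apply ENNReal.ofReal_le_ofReal
  rw [← Real.mul_rpow hM0 (by positivity), dist_comm]
  exact Real.rpow_le_rpow dist_nonneg (hM x) (by linarith)

theorem aux_key [ProperSpace X] {p : ℝ} (hp : 1 ≤ p) {x₀ : X} {f : X → X} (hf : Continuous f)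
    {M : ℝ} (hM0 : 0 ≤ M) (hM : ∀ x, dist (f x) x₀ ≤ M * (1 + dist x x₀)) {μ : Measure X}
    (hμ : μ ∈ Pp p x₀) {ε : ℝ} (hε : 0 < ε) :
    ∃ K : ℝ, 0 ≤ K ∧ ∀ (ν : Measure X) (c : ℝ≥0∞), wCost p ν μ < c →
      wCost p (ν.map f) (μ.map f) ≤
        ENNReal.ofReal ε + ENNReal.ofReal ε + ENNReal.ofReal K * c := by
  have hμ1 := hμ.1
  set g : X → ℝ := fun y => (4 * M) ^ p * (1 + dist y x₀) ^ p with hg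
  have hg0 : ∀ y, 0 ≤ g y := fun y => by positivity
  have hgm : Measurable g := by
    have : Continuous g := continuous_const.mul
      ((continuous_const.add (continuous_id.dist continuous_const)).rpow_const
        (fun _ => Or.inr (by linarith)))
    exact this.measurable
  have hsm : ∀ R : ℝ, MeasurableSet {y : X | R < dist y x₀} := fun R =>
    (isOpen_lt continuous_const (continuous_id.dist continuous_const)).measurableSet
  obtain ⟨n, hn⟩ : ∃ n : ℕ, ∫⁻ y in {y : X | (n : ℝ) < dist y x₀}, ENNReal.ofReal (g y) ∂μ
      < ENNReal.ofReal ε := by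
    have hfin := aux_growth_lt_top hp hμ (C := (4 * M) ^ p) (by positivity)
    have hμt : Tendsto (fun n : ℕ => μ {y : X | (n : ℝ) < dist y x₀}) atTop (𝓝 0) := by
      have h := tendsto_measure_iInter_atTop (μ := μ)
        (s := fun n : ℕ => {y : X | (n : ℝ) < dist y x₀})
        (fun n => (hsm n).nullMeasurableSet)
        (fun a b hab y (hy : (b : ℝ) < dist y x₀) =>
          show (a : ℝ) < dist y x₀ from lt_of_le_of_lt (Nat.cast_le.2 hab) hy)
        ⟨0, measure_ne_top _ _⟩
      have he : (⋂ n : ℕ, {y : X | (n : ℝ) < dist y x₀}) = ∅ := by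
        ext y
        simp only [mem_iInter, mem_setOf_eq, mem_empty_iff_false, iff_false, not_forall, not_lt]
        exact exists_nat_ge _
      rwa [he, measure_empty] at h
    have := tendsto_setLIntegral_zero hfin.ne hμt
    exact (this.eventually_lt_const (by simpa using hε)).exists
  obtain ⟨K, hK0, hK⟩ := aux_pointwise hp x₀ hf hM0 hM hε (Nat.cast_nonneg n)
  refine ⟨K, hK0, fun ν c hc => ?_⟩
  rw [wCost] at hc
  obtain ⟨π, hπ⟩ := iInf_lt_iff.1 hc
  obtain ⟨⟨hπ1, hπ2, hπ3⟩, hπc⟩ := iInf_lt_iff.1 hπ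
  have hF : Measurable (fun q : X × X => (f q.1, f q.2)) :=
    (hf.measurable.comp measurable_fst).prodMk (hf.measurable.comp measurable_snd)
  have hcoup : IsProbabilityMeasure (π.map (fun q : X × X => (f q.1, f q.2))) ∧
      IsCoupling (π.map (fun q : X × X => (f q.1, f q.2))) (ν.map f) (μ.map f) := by
    refine ⟨Measure.isProbabilityMeasure_map hF.aemeasurable, ?_, ?_⟩
    · rw [Measure.map_map measurable_fst hF, ← hπ2, Measure.map_map hf.measurable measurable_fst]
      rfl
    · rw [Measure.map_map measurable_snd hF, ← hπ3, Measure.map_map hf.measurable measurable_snd]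
      rfl
  refine (iInf₂_le (π.map (fun q : X × X => (f q.1, f q.2))) hcoup).trans ?_
  rw [lintegral_map (aux_meas p hp) hF]
  set G : X → ℝ≥0∞ := {y : X | (n : ℝ) < dist y x₀}.indicator (fun y => ENNReal.ofReal (g y))
    with hG
  have hGm : Measurable G := hgm.ennreal_ofReal.indicator (hsm n)
  have hb : ∀ q : X × X, ENNReal.ofReal (dist (f q.1) (f q.2) ^ p) ≤
      (ENNReal.ofReal ε + G q.2) + ENNReal.ofReal K * ENNReal.ofReal (dist q.1 q.2 ^ p) := by
    intro q
    refine (ENNReal.ofReal_le_ofReal (hK q.1 q.2)).trans ?_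
    refine ENNReal.ofReal_add_le.trans ?_
    rw [ENNReal.ofReal_mul hK0]
    gcongr
    refine ENNReal.ofReal_add_le.trans ?_
    gcongr
    rw [hG]
    by_cases hq : q.2 ∈ {y : X | (n : ℝ) < dist y x₀}
    · rw [Set.indicator_of_mem hq, Set.indicator_of_mem hq]
    · rw [Set.indicator_of_notMem hq, Set.indicator_of_notMem hq]; simp
  refine (lintegral_mono hb).trans ?_
  rw [lintegral_add_right _ ((aux_meas p hp).const_mul _),
    lintegral_add_left measurable_const, lintegral_const_mul _ (aux_meas p hp),
    ← lintegral_map hGm measurable_snd, hπ3, hG, lintegral_indicator (hsm n)]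
  simp only [lintegral_const, measure_univ, mul_one]
  gcongr

theorem aux_forward {p : ℝ} (hp : 1 ≤ p) {x₀ : X} {f : X → X} (hf : Continuous f)
    (h : ∀ μ ∈ Pp p x₀, μ.map f ∈ Pp p x₀) :
    ∃ M : ℝ, ∀ x : X, dist (f x) x₀ / (1 + dist x x₀) ≤ M := by
  have hp0 : 0 < p := by linarith
  by_contra hcon
  push Not at hcon
  choose x hx using fun n : ℕ => hcon (2 ^ n)
  set w : ℕ → ℝ := fun n => (1 / 2) ^ n / (1 + dist (x n) x₀) ^ p with hw
  have hwpos : ∀ n, 0 < w n := fun n => by positivity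
  have hd1 : ∀ n, 1 ≤ (1 + dist (x n) x₀) ^ p := fun n =>
    Real.one_le_rpow (by linarith [dist_nonneg (x := x n) (y := x₀)]) hp0.le
  have hwle : ∀ n, w n ≤ (1 / 2) ^ n := fun n => div_le_self (by positivity) (hd1 n)
  have hgeo : ∑' n : ℕ, ENNReal.ofReal ((1 / 2) ^ n) < ⊤ := by
    rw [← ENNReal.ofReal_tsum_of_nonneg (fun n => by positivity)
      (summable_geometric_of_lt_one (by norm_num) (by norm_num))]
    exact ENNReal.ofReal_lt_top
  set m : ℝ≥0∞ := ∑' n, ENNReal.ofReal (w n) with hm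
  have hmtop : m ≠ ⊤ := ne_of_lt <| lt_of_le_of_lt
    (ENNReal.tsum_le_tsum fun n => ENNReal.ofReal_le_ofReal (hwle n)) hgeo
  have hm0 : m ≠ 0 := by
    intro h0
    have := ENNReal.tsum_eq_zero.1 h0 0
    rw [ENNReal.ofReal_eq_zero] at this
    linarith [hwpos 0]
  set μ : Measure X := m⁻¹ • Measure.sum (fun n => ENNReal.ofReal (w n) • Measure.dirac (x n))
    with hμ
  have hint : ∀ g : X → ℝ≥0∞, Measurable g →
      ∫⁻ y, g y ∂μ = m⁻¹ * ∑' n, ENNReal.ofReal (w n) * g (x n) := by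
    intro g hg
    rw [hμ, lintegral_smul_measure, lintegral_sum_measure, smul_eq_mul]
    congr 1
    refine tsum_congr fun n => ?_
    rw [lintegral_smul_measure, lintegral_dirac' _ hg, smul_eq_mul]
  have hprob : IsProbabilityMeasure μ := by
    constructor
    have := hint (fun _ => 1) measurable_const
    simp only [lintegral_const, one_mul, mul_one] at this
    rw [this, ← hm, ENNReal.inv_mul_cancel hm0 hmtop]
  have hμP : μ ∈ Pp p x₀ := by
    refine ⟨hprob, ?_⟩
    rw [FiniteMoment, hint _ (aux_meas1 p hp x₀)]
    refine ENNReal.mul_lt_top (ENNReal.inv_lt_top.2 (pos_iff_ne_zero.2 hm0)) ?_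
    refine lt_of_le_of_lt (ENNReal.tsum_le_tsum fun n => ?_) hgeo
    rw [← ENNReal.ofReal_mul (hwpos n).le]
    apply ENNReal.ofReal_le_ofReal
    rw [hw]
    have h1 : dist x₀ (x n) ^ p ≤ (1 + dist (x n) x₀) ^ p := by
      rw [dist_comm]
      exact Real.rpow_le_rpow dist_nonneg (by linarith) hp0.le
    calc (1 / 2 : ℝ) ^ n / (1 + dist (x n) x₀) ^ p * dist x₀ (x n) ^ p
        ≤ (1 / 2 : ℝ) ^ n / (1 + dist (x n) x₀) ^ p * (1 + dist (x n) x₀) ^ p := by gcongr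
      _ = (1 / 2 : ℝ) ^ n := div_mul_cancel₀ _ (by linarith [hd1 n])
  have hfin := (h μ hμP).2
  rw [FiniteMoment, lintegral_map (aux_meas1 p hp x₀) hf.measurable,
    hint (fun y => ENNReal.ofReal (dist x₀ (f y) ^ p))
      ((aux_meas1 p hp x₀).comp hf.measurable)] at hfin
  have hone : ∀ n, (1 : ℝ≥0∞) ≤ ENNReal.ofReal (w n) * ENNReal.ofReal (dist x₀ (f (x n)) ^ p) := by
    intro n
    rw [← ENNReal.ofReal_mul (hwpos n).le, ← ENNReal.ofReal_one]
    apply ENNReal.ofReal_le_ofReal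
    have h2 : (1 : ℝ) ≤ 2 ^ n := one_le_pow₀ (by norm_num)
    have h3 : 2 ^ n ≤ (dist (f (x n)) x₀ / (1 + dist (x n) x₀)) ^ p :=
      calc (2 : ℝ) ^ n ≤ (2 ^ n : ℝ) ^ p := Real.self_le_rpow_of_one_le h2 hp
        _ ≤ _ := Real.rpow_le_rpow (by positivity) (hx n).le hp0.le
    rw [Real.div_rpow dist_nonneg (by positivity)] at h3
    rw [hw, dist_comm]
    calc (1 : ℝ) = (1 / 2) ^ n * 2 ^ n := by rw [← mul_pow]; norm_num
      _ ≤ (1 / 2) ^ n * (dist (f (x n)) x₀ ^ p / (1 + dist (x n) x₀) ^ p) := by gcongr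
      _ = _ := by ring
  have htop : ∑' n, ENNReal.ofReal (w n) * ENNReal.ofReal (dist x₀ (f (x n)) ^ p) = ⊤ := by
    rw [eq_top_iff, ← ENNReal.tsum_const_eq_top_of_ne_zero (α := ℕ) one_ne_zero]
    exact ENNReal.tsum_le_tsum hone
  have htop2 : m⁻¹ * ∑' n, ENNReal.ofReal (w n) * ENNReal.ofReal (dist x₀ (f (x n)) ^ p) = ⊤ := by
    rw [htop]
    exact ENNReal.mul_top (ENNReal.inv_ne_zero.2 hmtop)
  exact hfin.ne htop2

end

/-- **Characterization of `w_p`-continuity of the transfer map.** For a continuous map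
`f : X → X` on a proper complete separable metric space, the pushforward `f_*` maps
`P_p(X)` into itself and is `w_p`-continuous if and only if
`sup_x d(f(x), x₀)/(1 + d(x, x₀)) < ∞`. -/
theorem pushforward_wp_continuous_iff
    [MetricSpace X] [MeasurableSpace X] [BorelSpace X] [ProperSpace X] [CompleteSpace X]
    [TopologicalSpace.SeparableSpace X]
    (p : ℝ) (hp : 1 ≤ p) (x₀ : X) (f : X → X) (hf : Continuous f) :
    ((∀ μ ∈ Pp p x₀, μ.map f ∈ Pp p x₀) ∧
      (∀ (μs : ℕ → Measure X) (μ : Measure X), (∀ n, μs n ∈ Pp p x₀) → μ ∈ Pp p x₀ →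
        WpTendsto p μs μ → WpTendsto p (fun n => (μs n).map f) (μ.map f))) ↔
    ∃ M : ℝ, ∀ x : X, dist (f x) x₀ / (1 + dist x x₀) ≤ M := by
  have hsc : SecondCountableTopology X := inferInstance
  constructor
  · rintro ⟨h, -⟩
    exact aux_forward hp hf h
  · rintro ⟨M', hM'⟩
    set M := max M' 0
    have hM0 : 0 ≤ M := le_max_right _ _
    have hM : ∀ x, dist (f x) x₀ ≤ M * (1 + dist x x₀) := by
      intro x
      have := (hM' x).trans (le_max_left M' 0)
      rwa [div_le_iff₀ (by positivity)] at this
    have hmaps : ∀ μ ∈ Pp p x₀, μ.map f ∈ Pp p x₀ := fun μ hμ => aux_maps hp hf hM0 hM hμ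
    refine ⟨hmaps, fun μs μ hμs hμ hconv => ?_⟩
    rw [aux_tendsto_iff hp hμs hμ] at hconv
    rw [aux_tendsto_iff hp (fun n => hmaps _ (hμs n)) (hmaps _ hμ)]
    rw [ENNReal.tendsto_nhds_zero]
    intro e he
    obtain ⟨r, -, hr0, hre⟩ := ENNReal.lt_iff_exists_real_btwn.1 he
    have hrpos : 0 < r := by simpa using hr0
    obtain ⟨K, hK0, hK⟩ := aux_key hp hf hM0 hM hμ (ε := r / 3) (by positivity)
    have hc : (0 : ℝ≥0∞) < ENNReal.ofReal (r / 3 / (K + 1)) := by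
      rw [ENNReal.ofReal_pos]; positivity
    filter_upwards [hconv.eventually_lt_const hc] with n hn
    refine (hK _ _ hn).trans (le_trans ?_ hre.le)
    rw [← ENNReal.ofReal_mul hK0, ← ENNReal.ofReal_add (by positivity) (by positivity),
      ← ENNReal.ofReal_add (by positivity) (by positivity)]
    apply ENNReal.ofReal_le_ofReal
    have : K * (r / 3 / (K + 1)) ≤ r / 3 := by
      rw [mul_div_assoc', div_le_iff₀ (by positivity)]
      nlinarith
    linarith
end
end

section
/- Let (X,d) be a proper complete separable metric space with base point x0 and let f: X -> X be continuous such that the pushforward f_* is a w_1-continuous self-map of P_1(X). Suppose there are m > 0 and R >= 0 with f^m(X) contained in the closed ball B_R(x0). Then the image f_*^m(P_1(X)) is relatively compact in (P_1(X), w_1); consequently every closed subset of (P_1(X), w_1) is f_*-admissible. -/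
open MeasureTheory Topology Filter Metric Set
open scoped ENNReal NNReal

noncomputable section

variable {X : Type*}

/-- A set `N ⊆ P_p(X)` is admissible for a sequence of maps `F n` on measures: whenever
orbit segments `F n^[0..m n] (μs n)` stay in `N` with `m n → ∞`, the endpoints have a
subsequence converging in `(P_p(X), w_p)`. -/
def WpSeqAdmissible [MetricSpace X] [MeasurableSpace X] (p : ℝ) (x₀ : X)
    (F : ℕ → Measure X → Measure X) (N : Set (Measure X)) : Prop :=
  ∀ (μs : ℕ → Measure X) (m : ℕ → ℕ), Tendsto m atTop atTop →
    (∀ n, ∀ k ≤ m n, (F n)^[k] (μs n) ∈ N) →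
    ∃ μ ∈ Pp p x₀, ∃ φ : ℕ → ℕ, StrictMono φ ∧
      WpTendsto p (fun j => (F (φ j))^[m (φ j)] (μs (φ j))) μ

/-- A set `N ⊆ P_p(X)` is `F`-admissible. -/
def WpAdmissible [MetricSpace X] [MeasurableSpace X] (p : ℝ) (x₀ : X)
    (F : Measure X → Measure X) (N : Set (Measure X)) : Prop :=
  WpSeqAdmissible p x₀ (fun _ => F) N

/-- A subset of `P_p(X)` that is (sequentially) closed in `(P_p(X), w_p)`. -/
def WpClosed [MetricSpace X] [MeasurableSpace X] (p : ℝ) (x₀ : X)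
    (N : Set (Measure X)) : Prop :=
  N ⊆ Pp p x₀ ∧ ∀ (μs : ℕ → Measure X) (μ : Measure X), (∀ n, μs n ∈ N) →
    μ ∈ Pp p x₀ → WpTendsto p μs μ → μ ∈ N

/-- A subset of `P_p(X)` that is bounded for `w_p`. -/
def WpBounded [MetricSpace X] [MeasurableSpace X] (p : ℝ) (x₀ : X)
    (N : Set (Measure X)) : Prop :=
  ∃ R : ℝ, ∀ μ ∈ N, Wp p μ (Measure.dirac x₀) ≤ R

/-- The (sequential) closure of a subset of `P_p(X)` in `(P_p(X), w_p)`. -/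
def WpClosure [MetricSpace X] [MeasurableSpace X] (p : ℝ) (x₀ : X)
    (S : Set (Measure X)) : Set (Measure X) :=
  {μ | μ ∈ Pp p x₀ ∧ ∃ μs : ℕ → Measure X, (∀ n, μs n ∈ S) ∧ WpTendsto p μs μ}

/-- Two finite measures of the same mass are coupled by a multiple of their product. -/
lemma exists_prod_coupling {Y : Type*} [MeasurableSpace Y] (α β : Measure Y) [IsFiniteMeasure α]
    [IsFiniteMeasure β] (h : α univ = β univ) :
    ∃ c : ℝ≥0∞, (c • α.prod β).map Prod.fst = α ∧ (c • α.prod β).map Prod.snd = β := by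
  refine ⟨(α univ)⁻¹, ?_, ?_⟩
  · rw [Measure.map_smul, Measure.map_fst_prod, ← h, smul_smul]
    by_cases h0 : α univ = 0
    · rw [Measure.measure_univ_eq_zero] at h0
      simp [h0]
    · rw [ENNReal.inv_mul_cancel h0 (measure_ne_top _ _), one_smul]
  · rw [Measure.map_smul, Measure.map_snd_prod, smul_smul]
    by_cases h0 : α univ = 0
    · rw [h, Measure.measure_univ_eq_zero] at h0
      simp [h0]
    · rw [ENNReal.inv_mul_cancel h0 (measure_ne_top _ _), one_smul]

lemma div_mass_aux {a p : ℝ≥0∞} (hap : a ≤ p) (hp : p ≠ ⊤) : a / p * p = a := by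
  by_cases h0 : p = 0
  · subst h0
    simp at hap
    simp [hap]
  · exact ENNReal.div_mul_cancel h0 hp

lemma wCost_le_of_decomp {Y ι : Type*} [MetricSpace Y] [MeasurableSpace Y] [BorelSpace Y]
    [SecondCountableTopology Y] [Fintype ι] (μ ν : Measure Y) [IsProbabilityMeasure μ]
    [IsProbabilityMeasure ν] (μi νi : ι → Measure Y) (hμ : ∑ i, μi i = μ) (hν : ∑ i, νi i = ν)
    (ε D : ℝ) (hD : ∀ x y : Y, dist x y ≤ D)
    (hε : ∀ i, ∀ᵐ q ∂((μi i).prod (νi i)), dist q.1 q.2 ≤ ε) :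
    wCost 1 μ ν ≤ ENNReal.ofReal ε +
      ENNReal.ofReal D * ∑ i, (μi i univ - νi i univ) := by
  classical
  have hμle : ∀ i, μi i ≤ μ := fun i => by
    rw [← hμ]; exact Finset.single_le_sum (fun _ _ => Measure.zero_le _) (Finset.mem_univ i)
  have hνle : ∀ i, νi i ≤ ν := fun i => by
    rw [← hν]; exact Finset.single_le_sum (fun _ _ => Measure.zero_le _) (Finset.mem_univ i)
  have : ∀ i, IsFiniteMeasure (μi i) := fun i => isFiniteMeasure_of_le μ (hμle i)
  have : ∀ i, IsFiniteMeasure (νi i) := fun i => isFiniteMeasure_of_le ν (hνle i)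
  set p : ι → ℝ≥0∞ := fun i => μi i univ with hp
  set q : ι → ℝ≥0∞ := fun i => νi i univ with hq
  set a : ι → ℝ≥0∞ := fun i => min (p i) (q i) with ha
  have hpt : ∀ i, p i ≠ ⊤ := fun i => measure_ne_top _ _
  have hqt : ∀ i, q i ≠ ⊤ := fun i => measure_ne_top _ _
  have hap : ∀ i, a i ≤ p i := fun i => min_le_left _ _
  have haq : ∀ i, a i ≤ q i := fun i => min_le_right _ _
  have hat : ∀ i, a i ≠ ⊤ := fun i => ne_top_of_le_ne_top (hpt i) (hap i)
  set c : ι → ℝ≥0∞ := fun i => a i / p i with hc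
  set d : ι → ℝ≥0∞ := fun i => a i / q i with hd
  have hc1 : ∀ i, c i ≤ 1 := fun i => ENNReal.div_le_of_le_mul (by simpa using hap i)
  have hd1 : ∀ i, d i ≤ 1 := fun i => ENNReal.div_le_of_le_mul (by simpa using haq i)
  have hcp : ∀ i, c i * p i = a i := fun i => div_mass_aux (hap i) (hpt i)
  have hdq : ∀ i, d i * q i = a i := fun i => div_mass_aux (haq i) (hqt i)
  set μ' : Measure Y := ∑ i, (1 - c i) • μi i with hμ'
  set ν' : Measure Y := ∑ i, (1 - d i) • νi i with hν'
  have hsμ : ∑ i, c i • μi i + μ' = μ := by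
    rw [hμ', ← Finset.sum_add_distrib, ← hμ]
    refine Finset.sum_congr rfl fun i _ => ?_
    rw [← add_smul, add_tsub_cancel_of_le (hc1 i), one_smul]
  have hsν : ∑ i, d i • νi i + ν' = ν := by
    rw [hν', ← Finset.sum_add_distrib, ← hν]
    refine Finset.sum_congr rfl fun i _ => ?_
    rw [← add_smul, add_tsub_cancel_of_le (hd1 i), one_smul]
  have hmμ : ∑ i, a i + μ' univ = 1 := by
    have := congrArg (fun m : Measure Y => m univ) hsμ
    simp only [Measure.add_apply, Measure.finsetSum_apply, Measure.smul_apply, smul_eq_mul,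
      measure_univ] at this
    rw [← this]
    congr 1
    exact Finset.sum_congr rfl fun i _ => (hcp i).symm
  have hmν : ∑ i, a i + ν' univ = 1 := by
    have := congrArg (fun m : Measure Y => m univ) hsν
    simp only [Measure.add_apply, Measure.finsetSum_apply, Measure.smul_apply, smul_eq_mul,
      measure_univ] at this
    rw [← this]
    congr 1
    exact Finset.sum_congr rfl fun i _ => (hdq i).symm
  have hsa : ∑ i, a i ≠ ⊤ := by
    intro h; rw [h] at hmμ; simp at hmμ
  have hmass : μ' univ = ν' univ := by
    have := hmμ.trans hmν.symm
    exact (ENNReal.add_right_inj hsa).1 this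
  have : IsFiniteMeasure μ' := isFiniteMeasure_of_le μ (by rw [← hsμ]; exact Measure.le_add_left le_rfl)
  have : IsFiniteMeasure ν' := isFiniteMeasure_of_le ν (by rw [← hsν]; exact Measure.le_add_left le_rfl)
  have hμ'mass : μ' univ = ∑ i, (p i - q i) := by
    rw [hμ']
    simp only [Measure.finsetSum_apply, Measure.smul_apply, smul_eq_mul]
    refine Finset.sum_congr rfl fun i _ => ?_
    change (1 - c i) * p i = _
    rw [ENNReal.sub_mul (fun _ _ => hpt i), one_mul, hcp]
    rcases le_total (p i) (q i) with h | h
    · simp [ha, h, tsub_eq_zero_of_le h]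
    · simp [ha, h]
  have : ∀ i, IsFiniteMeasure (c i • μi i) := fun i => by
    apply isFiniteMeasure_of_le (μi i)
    intro s
    simpa using mul_le_of_le_one_left (zero_le) (hc1 i)
  have : ∀ i, IsFiniteMeasure (d i • νi i) := fun i => by
    apply isFiniteMeasure_of_le (νi i)
    intro s
    simpa using mul_le_of_le_one_left (zero_le) (hd1 i)
  have hex : ∀ i, ∃ e : ℝ≥0∞, (e • (c i • μi i).prod (d i • νi i)).map Prod.fst = c i • μi i ∧
      (e • (c i • μi i).prod (d i • νi i)).map Prod.snd = d i • νi i := fun i =>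
    exists_prod_coupling _ _ (by
      simp only [Measure.smul_apply, smul_eq_mul]; exact (hcp i).trans (hdq i).symm)
  choose e he1 he2 using hex
  obtain ⟨e', he1', he2'⟩ := exists_prod_coupling μ' ν' hmass
  set πi : ι → Measure (Y × Y) := fun i => e i • (c i • μi i).prod (d i • νi i) with hπi
  set π' : Measure (Y × Y) := e' • μ'.prod ν' with hπ'
  have hfst : (∑ i, πi i + π').map Prod.fst = μ := by
    rw [Measure.map_add _ _ measurable_fst, he1', ← Measure.mapₗ_apply_of_measurable measurable_fst,
      map_sum]
    simp only [Measure.mapₗ_apply_of_measurable measurable_fst]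
    rw [← hsμ]
    congr 1
    exact Finset.sum_congr rfl fun i _ => he1 i
  have hsnd : (∑ i, πi i + π').map Prod.snd = ν := by
    rw [Measure.map_add _ _ measurable_snd, he2', ← Measure.mapₗ_apply_of_measurable measurable_snd,
      map_sum]
    simp only [Measure.mapₗ_apply_of_measurable measurable_snd]
    rw [← hsν]
    congr 1
    exact Finset.sum_congr rfl fun i _ => he2 i
  have hprob : IsProbabilityMeasure (∑ i, πi i + π') := by
    constructor
    have := congrArg (fun m : Measure Y => m univ) hfst
    simpa only [Measure.map_apply measurable_fst MeasurableSet.univ, preimage_univ,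
      measure_univ] using this
  have hπimass : ∀ i, πi i univ = a i := fun i => by
    have := congrArg (fun m : Measure Y => m univ) (he1 i)
    simp only [Measure.map_apply measurable_fst MeasurableSet.univ, preimage_univ] at this
    rw [hπi]
    simp only
    rw [this, Measure.smul_apply, smul_eq_mul]
    exact hcp i
  have hπ'mass : π' univ = ∑ i, (p i - q i) := by
    have := congrArg (fun m : Measure Y => m univ) he1'
    simp only [Measure.map_apply measurable_fst MeasurableSet.univ, preimage_univ] at this
    rw [hπ', this, hμ'mass]
  refine (iInf₂_le (∑ i, πi i + π') ⟨hprob, hfst, hsnd⟩).trans ?_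
  rw [lintegral_add_measure, lintegral_finsetSum_measure]
  simp only [Real.rpow_one]
  gcongr
  · calc ∑ i, ∫⁻ z, ENNReal.ofReal (dist z.1 z.2) ∂(πi i)
        ≤ ∑ i, ENNReal.ofReal ε * a i := by
          refine Finset.sum_le_sum fun i _ => ?_
          rw [← hπimass i, ← lintegral_const]
          refine lintegral_mono_ae ?_
          have hac : πi i ≪ (μi i).prod (νi i) := by
            refine (Measure.smul_absolutelyContinuous).trans ?_
            exact Measure.AbsolutelyContinuous.prod Measure.smul_absolutelyContinuous
              Measure.smul_absolutelyContinuous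
          filter_upwards [hac.ae_le (hε i)] with z hz
          exact ENNReal.ofReal_le_ofReal hz
      _ = ENNReal.ofReal ε * ∑ i, a i := by rw [Finset.mul_sum]
      _ ≤ ENNReal.ofReal ε * 1 := by gcongr; rw [← hmμ]; exact le_self_add
      _ = _ := mul_one _
  · rw [← hπ'mass, ← lintegral_const]
    exact lintegral_mono fun z => ENNReal.ofReal_le_ofReal (hD _ _)

/-- On a compact metric space, weak convergence implies convergence of the transport cost. -/
lemma wCost_tendsto_of_compact {Y : Type*} [MetricSpace Y] [MeasurableSpace Y] [BorelSpace Y]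
    [CompactSpace Y] (μs : ℕ → ProbabilityMeasure Y) (μ : ProbabilityMeasure Y)
    (h : Tendsto μs atTop (𝓝 μ)) :
    Tendsto (fun n => wCost 1 (μs n : Measure Y) (μ : Measure Y)) atTop (𝓝 0) := by
  classical
  rw [ENNReal.tendsto_nhds_zero]
  intro ε₀ hε₀
  obtain ⟨ε, hεpos, hε⟩ : ∃ ε : ℝ, 0 < ε ∧ ENNReal.ofReal (2 * ε) ≤ ε₀ / 2 := by
    have h2 : 0 < ε₀ / 2 := ENNReal.half_pos hε₀.ne'
    obtain ⟨r, hr0, hr⟩ := ENNReal.lt_iff_exists_nnreal_btwn.1 h2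
    refine ⟨r / 2, ?_, ?_⟩
    · have : 0 < r := by exact_mod_cast hr0
      positivity
    · rw [mul_div_cancel₀ _ (two_ne_zero), ENNReal.ofReal_coe_nnreal]
      exact hr.le
  obtain ⟨t, -, htf, ht⟩ := (isCompact_univ (X := Y)).finite_cover_balls hεpos
  have := htf.fintype
  obtain ⟨φ, hφ⟩ := PartitionOfUnity.exists_isSubordinate (isClosed_univ (X := Y))
    (fun i : t => ball (i : Y) ε) (fun i => isOpen_ball)
    (by rw [← biUnion_eq_iUnion (s := t) (t := fun x _ => ball x ε)]; exact ht)
  let ψ : t → BoundedContinuousFunction Y ℝ≥0 := fun i =>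
    BoundedContinuousFunction.mkOfCompact ⟨fun x => (φ i x).toNNReal,
      continuous_real_toNNReal.comp (φ i).continuous⟩
  have hψ : ∀ i x, ψ i x = (φ i x).toNNReal := fun i x => rfl
  have hψsum : ∀ x, ∑ i, (ψ i x : ℝ≥0∞) = 1 := by
    intro x
    have h1 := φ.sum_eq_one (mem_univ x)
    rw [finsum_eq_sum_of_fintype] at h1
    have : ∑ i, ψ i x = 1 := by
      simp only [hψ]
      rw [← Real.toNNReal_sum_of_nonneg (fun i _ => φ.nonneg i x), h1, Real.toNNReal_one]
    exact_mod_cast this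
  have hψm : ∀ i, Measurable (fun x => (ψ i x : ℝ≥0∞)) := fun i =>
    (ENNReal.continuous_coe.comp (ψ i).continuous).measurable
  have hdec : ∀ ν : Measure Y, ∑ i, ν.withDensity (fun x => (ψ i x : ℝ≥0∞)) = ν := by
    intro ν
    ext s hs
    simp only [Measure.finsetSum_apply, withDensity_apply _ hs]
    rw [← lintegral_finsetSum _ (fun i _ => hψm i)]
    simp [hψsum]
  have hball : ∀ (ν : Measure Y) (i : t), ∀ᵐ x ∂(ν.withDensity (fun x => (ψ i x : ℝ≥0∞))),
      dist x (i : Y) ≤ ε := by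
    intro ν i
    rw [ae_withDensity_iff (hψm i)]
    refine Eventually.of_forall fun x hx => ?_
    have : x ∈ tsupport (φ i) := by
      apply subset_tsupport
      intro h0
      apply hx
      rw [hψ, h0]
      simp
    exact (mem_ball.1 (hφ i this)).le
  have hbound : ∀ n, wCost 1 (μs n : Measure Y) (μ : Measure Y) ≤ ENNReal.ofReal (2 * ε) +
      ENNReal.ofReal (diam (univ : Set Y)) *
        ∑ i, (∫⁻ x, ψ i x ∂(μs n : Measure Y) - ∫⁻ x, ψ i x ∂(μ : Measure Y)) := by
    intro n
    refine (wCost_le_of_decomp (μs n : Measure Y) (μ : Measure Y) _ _ (hdec _) (hdec _) (2 * ε)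
      (diam (univ : Set Y)) (fun x y => dist_le_diam_of_mem isCompact_univ.isBounded
        (mem_univ _) (mem_univ _)) ?_).trans (le_of_eq ?_)
    · intro i
      have hA := Measure.quasiMeasurePreserving_fst (μ := (μs n : Measure Y).withDensity
        (fun x => (ψ i x : ℝ≥0∞))) (ν := (μ : Measure Y).withDensity
        (fun x => (ψ i x : ℝ≥0∞))) |>.ae (hball _ i)
      have hB := Measure.quasiMeasurePreserving_snd (μ := (μs n : Measure Y).withDensity
        (fun x => (ψ i x : ℝ≥0∞))) (ν := (μ : Measure Y).withDensity
        (fun x => (ψ i x : ℝ≥0∞))) |>.ae (hball _ i)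
      filter_upwards [hA, hB] with z h1 h2
      have := dist_triangle_right z.1 z.2 (i : Y)
      linarith
    · simp only [withDensity_apply _ MeasurableSet.univ, Measure.restrict_univ]
  have hlim : Tendsto (fun n => ENNReal.ofReal (diam (univ : Set Y)) *
        ∑ i, (∫⁻ x, ψ i x ∂(μs n : Measure Y) - ∫⁻ x, ψ i x ∂(μ : Measure Y))) atTop (𝓝 0) := by
    have hs : Tendsto (fun n => ∑ i, (∫⁻ x, ψ i x ∂(μs n : Measure Y) -
        ∫⁻ x, ψ i x ∂(μ : Measure Y))) atTop (𝓝 (∑ i : t, 0)) := by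
      refine tendsto_finsetSum _ fun i _ => ?_
      have hi := ProbabilityMeasure.tendsto_iff_forall_lintegral_tendsto.1 h (ψ i)
      have hne : ∫⁻ x, ψ i x ∂(μ : Measure Y) ≠ ⊤ :=
        ((ψ i).lintegral_lt_top_of_nnreal (μ : Measure Y)).ne
      have := ENNReal.Tendsto.sub hi (tendsto_const_nhds (x := ∫⁻ x, ψ i x ∂(μ : Measure Y)))
        (Or.inl hne)
      simpa using this
    have := ENNReal.Tendsto.const_mul (a := ENNReal.ofReal (diam (univ : Set Y))) hs
      (Or.inr ENNReal.ofReal_ne_top)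
    simpa using this
  have h2 : 0 < ε₀ / 2 := ENNReal.half_pos hε₀.ne'
  filter_upwards [ENNReal.tendsto_nhds_zero.1 hlim _ h2] with n hn
  calc _ ≤ _ := hbound n
    _ ≤ ε₀ / 2 + ε₀ / 2 := add_le_add hε hn
    _ = ε₀ := ENNReal.add_halves _

lemma wCost_map_val_le {Y : Type*} [MetricSpace Y] [MeasurableSpace Y] [BorelSpace Y]
    [SecondCountableTopology Y] (K : Set Y) (μ ν : Measure K) :
    wCost 1 (μ.map Subtype.val) (ν.map Subtype.val) ≤ wCost 1 μ ν := by
  refine le_iInf₂ fun π hπ => ?_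
  obtain ⟨h1, h2, h3⟩ := hπ
  have hval : Measurable (Subtype.val : K → Y) := measurable_subtype_coe
  have hm : Measurable (Prod.map (Subtype.val : K → Y) (Subtype.val : K → Y)) :=
    hval.prodMap hval
  have hP : IsProbabilityMeasure (π.map (Prod.map (Subtype.val : K → Y) (Subtype.val : K → Y))) :=
    Measure.isProbabilityMeasure_map hm.aemeasurable
  have hF : (π.map (Prod.map (Subtype.val : K → Y) (Subtype.val : K → Y))).map Prod.fst =
      μ.map Subtype.val := by
    rw [Measure.map_map measurable_fst hm, ← h2, Measure.map_map hval measurable_fst]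
    rfl
  have hS : (π.map (Prod.map (Subtype.val : K → Y) (Subtype.val : K → Y))).map Prod.snd =
      ν.map Subtype.val := by
    rw [Measure.map_map measurable_snd hm, ← h3, Measure.map_map hval measurable_snd]
    rfl
  refine (iInf₂_le (π.map (Prod.map Subtype.val Subtype.val)) ⟨hP, hF, hS⟩).trans ?_
  rw [lintegral_map (by fun_prop) hm]
  exact le_rfl

lemma iterate_map_eq {Y : Type*} [MeasurableSpace Y] (f : Y → Y) (hf : Measurable f)
    (k : ℕ) (μ : Measure Y) : (fun μ : Measure Y => μ.map f)^[k] μ = μ.map f^[k] := by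
  induction k with
  | zero => simp
  | succ k ih =>
    rw [Function.iterate_succ_apply', ih, Measure.map_map hf (hf.iterate k),
      Function.iterate_succ']

lemma relcompact_aux [MetricSpace X] [MeasurableSpace X] [BorelSpace X] [ProperSpace X]
    (x₀ : X) (f : X → X) (hf : Continuous f) (m : ℕ) (R : ℝ)
    (hfm : ∀ x : X, f^[m] x ∈ Metric.closedBall x₀ R) (μs : ℕ → Measure X)
    (hμs : ∀ n, μs n ∈ (fun μ : Measure X => μ.map f)^[m] '' (Pp 1 x₀)) :
    ∃ μ ∈ Pp 1 x₀, ∃ φ : ℕ → ℕ, StrictMono φ ∧ WpTendsto 1 (fun j => μs (φ j)) μ := by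
  choose ρ hρ hρμ using hμs
  have : ∀ n, IsProbabilityMeasure (ρ n) := fun n => (hρ n).1
  have : CompactSpace (closedBall x₀ R) :=
    isCompact_iff_compactSpace.1 (isCompact_closedBall x₀ R)
  have hfmm : Measurable f^[m] := (hf.iterate m).measurable
  let g : X → closedBall x₀ R := fun x => ⟨f^[m] x, hfm x⟩
  have hg : Measurable g := hfmm.subtype_mk
  let ν : ℕ → ProbabilityMeasure (closedBall x₀ R) := fun n =>
    ⟨(ρ n).map g, Measure.isProbabilityMeasure_map hg.aemeasurable⟩
  have hval : Measurable (Subtype.val : closedBall x₀ R → X) := measurable_subtype_coe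
  have hν : ∀ n, ((ν n : Measure (closedBall x₀ R))).map Subtype.val = μs n := fun n => by
    rw [← hρμ n, iterate_map_eq f hf.measurable]
    change ((ρ n).map g).map Subtype.val = _
    rw [Measure.map_map hval hg]
    rfl
  obtain ⟨ν₀, φ, hφ, hlim⟩ := CompactSpace.tendsto_subseq ν
  refine ⟨(ν₀ : Measure (closedBall x₀ R)).map Subtype.val, ⟨?_, ?_⟩, φ, hφ, ?_⟩
  · exact Measure.isProbabilityMeasure_map hval.aemeasurable
  · unfold FiniteMoment
    rw [lintegral_map (by fun_prop) hval]
    calc _ ≤ ∫⁻ x, ENNReal.ofReal R ∂(ν₀ : Measure (closedBall x₀ R)) := by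
          refine lintegral_mono fun x => ENNReal.ofReal_le_ofReal ?_
          rw [Real.rpow_one, dist_comm]
          exact x.2
      _ < ⊤ := by simp
  · have h1 := wCost_tendsto_of_compact _ _ hlim
    have h2 : Tendsto (fun j => wCost 1 (μs (φ j))
        ((ν₀ : Measure (closedBall x₀ R)).map Subtype.val)) atTop (𝓝 0) := by
      refine tendsto_of_tendsto_of_tendsto_of_le_of_le tendsto_const_nhds h1
        (fun _ => zero_le) fun j => ?_
      have := wCost_map_val_le (closedBall x₀ R) (ν (φ j) : Measure (closedBall x₀ R)) ν₀
      rw [hν] at this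
      exact this
    have h3 := (ENNReal.tendsto_toReal ENNReal.zero_ne_top).comp h2
    unfold WpTendsto Wp
    simpa [Function.comp_def] using h3

/-- If `f^m(X)` is contained in a closed ball, then `f_*^m(P₁(X))` is relatively compact in
`(P₁(X), w₁)` and every `w₁`-closed subset of `P₁(X)` is `f_*`-admissible. -/
theorem finite_time_bounded_implies_admissible
    [MetricSpace X] [MeasurableSpace X] [BorelSpace X] [ProperSpace X] [CompleteSpace X]
    [TopologicalSpace.SeparableSpace X] (x₀ : X) (f : X → X) (hf : Continuous f)
    (hmap : ∀ μ ∈ Pp 1 x₀, μ.map f ∈ Pp 1 x₀)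
    (hcont : ∀ (μs : ℕ → Measure X) (μ : Measure X), (∀ n, μs n ∈ Pp 1 x₀) → μ ∈ Pp 1 x₀ →
      WpTendsto 1 μs μ → WpTendsto 1 (fun n => (μs n).map f) (μ.map f))
    (m : ℕ) (hm : 0 < m) (R : ℝ) (hR : 0 ≤ R)
    (hfm : ∀ x : X, f^[m] x ∈ Metric.closedBall x₀ R) :
    (∀ μs : ℕ → Measure X,
        (∀ n, μs n ∈ (fun μ : Measure X => μ.map f)^[m] '' (Pp 1 x₀)) →
        ∃ μ ∈ Pp 1 x₀, ∃ φ : ℕ → ℕ, StrictMono φ ∧ WpTendsto 1 (fun j => μs (φ j)) μ) ∧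
    (∀ N : Set (Measure X), WpClosed 1 x₀ N →
        WpAdmissible 1 x₀ (fun μ : Measure X => μ.map f) N) := by
  have hrel := relcompact_aux x₀ f hf m R hfm
  refine ⟨hrel, ?_⟩
  intro N hN μs k hk hmem
  obtain ⟨n₀, hn₀⟩ := eventually_atTop.1 (hk.eventually_ge_atTop m)
  obtain ⟨μ, hμ, φ, hφ, hlim⟩ := hrel
    (fun n => (fun μ : Measure X => μ.map f)^[k (n + n₀)] (μs (n + n₀))) (fun n => by
      refine ⟨(fun μ : Measure X => μ.map f)^[k (n + n₀) - m] (μs (n + n₀)),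
        hN.1 (hmem _ _ (Nat.sub_le _ _)), ?_⟩
      rw [← Function.iterate_add_apply, Nat.add_sub_cancel' (hn₀ _ (Nat.le_add_left _ _))])
  exact ⟨μ, hμ, fun j => φ j + n₀, fun i j hij => Nat.add_lt_add_right (hφ hij) n₀, hlim⟩
end
end

section
/- Let (X,d) be a proper complete separable metric space with base point x0 and let f: X -> X be continuous such that the pushforward f_* is a w_1-continuous self-map of P_1(X). Suppose there are R_0 >= 0, 0 <= c < 1 and m > 0 such that f^m(B_R(x0)) is contained in B_{cR}(x0) for all R >= R_0, where B_R(x0) denotes the closed ball of radius R around x0. Then every bounded closed subset of (P_1(X), w_1) is f_*-admissible. -/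
open MeasureTheory Topology Filter Metric Set
open scoped ENNReal NNReal

noncomputable section

variable {X : Type*}

/-- Two finite measures of equal mass have a coupling. -/
lemma aux_coupling [MeasurableSpace X] (α β : Measure X) [IsFiniteMeasure α] [IsFiniteMeasure β]
    (h : α univ = β univ) : ∃ γ : Measure (X × X), IsCoupling γ α β := by
  by_cases h0 : α univ = 0
  · refine ⟨0, ?_, ?_⟩
    · rw [Measure.map_zero, Measure.measure_univ_eq_zero.1 h0]
    · rw [Measure.map_zero, Measure.measure_univ_eq_zero.1 (h.symm.trans h0)]
  · refine ⟨(α univ)⁻¹ • α.prod β, ?_, ?_⟩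
    · rw [Measure.map_smul, Measure.map_fst_prod, smul_smul, ← h,
        ENNReal.inv_mul_cancel h0 (measure_ne_top _ _), one_smul]
    · rw [Measure.map_smul, Measure.map_snd_prod, smul_smul,
        ENNReal.inv_mul_cancel h0 (measure_ne_top _ _), one_smul]

/-- Split two finite measures in parts of equal mass and a remainder (one-sided version). -/
lemma aux_split_le [MeasurableSpace X] (ν μ : Measure X) [IsFiniteMeasure ν] [IsFiniteMeasure μ]
    (h : ν univ ≤ μ univ) :
    ∃ β μ' : Measure X, μ = β + μ' ∧ ν univ = β univ ∧ μ' univ = μ univ - ν univ := by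
  by_cases h0 : μ univ = 0
  · refine ⟨0, μ, by simp, ?_, ?_⟩
    · rw [h0] at h; simpa using h
    · simp [h0]
  have hT : μ univ ≠ ⊤ := measure_ne_top _ _
  have hle : ν univ / μ univ ≤ 1 := ENNReal.div_le_of_le_mul (by simpa using h)
  refine ⟨(ν univ / μ univ) • μ, (1 - ν univ / μ univ) • μ, ?_, ?_, ?_⟩
  · rw [← add_smul, add_tsub_cancel_of_le hle, one_smul]
  · simp [ENNReal.div_mul_cancel h0 hT]
  · simp only [Measure.smul_apply, smul_eq_mul]
    rw [ENNReal.sub_mul (fun _ _ => hT), one_mul, ENNReal.div_mul_cancel h0 hT]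

/-- Split two finite measures in parts of equal mass and remainders. -/
lemma aux_split [MeasurableSpace X] (ν μ : Measure X) [IsFiniteMeasure ν] [IsFiniteMeasure μ] :
    ∃ α ν' β μ' : Measure X, ν = α + ν' ∧ μ = β + μ' ∧ α univ = β univ ∧
      ν' univ = ν univ - μ univ ∧ μ' univ = μ univ - ν univ := by
  rcases le_total (ν univ) (μ univ) with h | h
  · obtain ⟨β, μ', h1, h2, h3⟩ := aux_split_le ν μ h
    exact ⟨ν, 0, β, μ', by simp, h1, h2, by simp [tsub_eq_zero_of_le h], h3⟩
  · obtain ⟨β, μ', h1, h2, h3⟩ := aux_split_le μ ν h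
    exact ⟨β, μ', μ, 0, h1, by simp, h2.symm, h3, by simp [tsub_eq_zero_of_le h]⟩

lemma aux_cost [MetricSpace X] (q : X × X) :
    ENNReal.ofReal (dist q.1 q.2 ^ (1 : ℝ)) = edist q.1 q.2 := by
  rw [Real.rpow_one, edist_dist]

lemma aux_map_sum [MeasurableSpace X] {Y : Type*} [MeasurableSpace Y] {ι : Type*} [Fintype ι]
    (γ : ι → Measure X) (g : X → Y) (hg : Measurable g) :
    (∑ i, γ i).map g = ∑ i, (γ i).map g := by
  simp only [← Measure.sum_fintype]
  rw [Measure.map_sum hg.aemeasurable]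

/-- Any coupling has cost at most the sum of first moments. -/
lemma aux_cost_le_moments [MetricSpace X] [MeasurableSpace X] [BorelSpace X]
    [SecondCountableTopology X] (x₀ : X) {γ : Measure (X × X)} {α β : Measure X}
    (h : IsCoupling γ α β) :
    ∫⁻ q, edist q.1 q.2 ∂γ ≤ ∫⁻ x, edist x x₀ ∂α + ∫⁻ x, edist x x₀ ∂β := by
  have hm : Measurable fun x : X => edist x x₀ := by fun_prop
  rw [← h.1, ← h.2, lintegral_map hm measurable_fst, lintegral_map hm measurable_snd,
    ← lintegral_add_left (f := fun q : X × X => edist q.1 x₀) (hm.comp measurable_fst)]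
  exact lintegral_mono fun q => edist_triangle_right _ _ _

/-- A coupling of measures carried by a set of small diameter is cheap. -/
lemma aux_cost_le_diam [MetricSpace X] [MeasurableSpace X] [BorelSpace X]
    [SecondCountableTopology X] {γ : Measure (X × X)} {α β : Measure X}
    (h : IsCoupling γ α β) {S : Set X} (hS : MeasurableSet S) (hα : α Sᶜ = 0) (hβ : β Sᶜ = 0)
    {ε : ℝ≥0∞} (hε : ∀ x ∈ S, ∀ y ∈ S, edist x y ≤ ε) :
    ∫⁻ q, edist q.1 q.2 ∂γ ≤ ε * α univ := by
  have h1 : ∀ᵐ q ∂γ, q.1 ∈ S := by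
    rw [← h.1, Measure.map_apply measurable_fst hS.compl] at hα
    exact hα
  have h2 : ∀ᵐ q ∂γ, q.2 ∈ S := by
    rw [← h.2, Measure.map_apply measurable_snd hS.compl] at hβ
    exact hβ
  calc ∫⁻ q, edist q.1 q.2 ∂γ ≤ ∫⁻ q, ε ∂γ := by
        apply lintegral_mono_ae
        filter_upwards [h1, h2] with q a b using hε _ a _ b
    _ = ε * α univ := by
        rw [lintegral_const, ← h.1, Measure.map_apply measurable_fst MeasurableSet.univ,
          preimage_univ]

lemma aux_moment_le [MetricSpace X] [MeasurableSpace X] (x₀ : X) {α : Measure X} {S : Set X}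
    (hα : α Sᶜ = 0) {H : ℝ≥0∞} (hH : ∀ x ∈ S, edist x x₀ ≤ H) :
    ∫⁻ x, edist x x₀ ∂α ≤ H * α univ := by
  have h1 : ∀ᵐ x ∂α, x ∈ S := hα
  calc ∫⁻ x, edist x x₀ ∂α ≤ ∫⁻ x, H ∂α := by
        apply lintegral_mono_ae
        filter_upwards [h1] with q a using hH _ a
    _ = H * α univ := lintegral_const _

/-- Main transport estimate. -/
lemma aux_main [MetricSpace X] [MeasurableSpace X] [BorelSpace X]
    [SecondCountableTopology X] (x₀ : X) (ν μ : Measure X) [IsProbabilityMeasure ν]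
    [IsProbabilityMeasure μ] {ι : Type*} [Fintype ι] (S : ι → Set X)
    (hS : ∀ i, MeasurableSet (S i)) (hd : Pairwise (Function.onFun Disjoint S)) {ε H : ℝ≥0∞}
    (hε : ∀ i, ∀ x ∈ S i, ∀ y ∈ S i, edist x y ≤ ε) (hH : ∀ i, ∀ x ∈ S i, edist x x₀ ≤ H) :
    wCost 1 ν μ ≤ ε + ((∫⁻ x in (⋃ i, S i)ᶜ, edist x x₀ ∂ν + H * ∑ i, (ν (S i) - μ (S i))) +
      (∫⁻ x in (⋃ i, S i)ᶜ, edist x x₀ ∂μ + H * ∑ i, (μ (S i) - ν (S i)))) := by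
  have hU : MeasurableSet (⋃ i, S i) := MeasurableSet.iUnion hS
  have dec : ∀ ρ : Measure X, ρ = (∑ i, ρ.restrict (S i)) + ρ.restrict (⋃ i, S i)ᶜ := by
    intro ρ
    rw [← Measure.sum_fintype, ← Measure.restrict_iUnion hd hS, Measure.restrict_add_restrict_compl hU]
  choose α ν' β μ' h1 h2 h3 h4 h5 using fun i => aux_split (ν.restrict (S i)) (μ.restrict (S i))
  simp only [Measure.restrict_apply_univ] at h4 h5
  have hαν : ∀ i, α i ≤ ν.restrict (S i) := fun i => by rw [h1]; exact Measure.le_add_right le_rfl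
  have hν'ν : ∀ i, ν' i ≤ ν.restrict (S i) := fun i => by rw [h1]; exact Measure.le_add_left le_rfl
  have hβμ : ∀ i, β i ≤ μ.restrict (S i) := fun i => by rw [h2]; exact Measure.le_add_right le_rfl
  have hμ'μ : ∀ i, μ' i ≤ μ.restrict (S i) := fun i => by rw [h2]; exact Measure.le_add_left le_rfl
  have nul : ∀ (ρ κ : Measure X) i, κ ≤ ρ.restrict (S i) → κ (S i)ᶜ = 0 := by
    intro ρ κ i h
    have := h (S i)ᶜ
    rw [Measure.restrict_apply (hS i).compl] at this
    simpa using this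
  have : ∀ i, IsFiniteMeasure (α i) := fun i => isFiniteMeasure_of_le _ (hαν i)
  have : ∀ i, IsFiniteMeasure (β i) := fun i => isFiniteMeasure_of_le _ (hβμ i)
  have : ∀ i, IsFiniteMeasure (ν' i) := fun i => isFiniteMeasure_of_le _ (hν'ν i)
  have : ∀ i, IsFiniteMeasure (μ' i) := fun i => isFiniteMeasure_of_le _ (hμ'μ i)
  choose γ hγ using fun i => aux_coupling (α i) (β i) (h3 i)
  set νr : Measure X := (∑ i, ν' i) + ν.restrict (⋃ i, S i)ᶜ with hνr
  set μr : Measure X := (∑ i, μ' i) + μ.restrict (⋃ i, S i)ᶜ with hμr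
  have dν : ν = (∑ i, α i) + νr := by
    rw [hνr, ← add_assoc, ← Finset.sum_add_distrib]
    simp only [← h1]
    exact dec ν
  have dμ : μ = (∑ i, β i) + μr := by
    rw [hμr, ← add_assoc, ← Finset.sum_add_distrib]
    simp only [← h2]
    exact dec μ
  have mν : ∑ i, α i univ + νr univ = 1 := by
    have := congrArg (fun ρ : Measure X => ρ univ) dν
    simpa using this.symm
  have mμ : ∑ i, α i univ + μr univ = 1 := by
    have := congrArg (fun ρ : Measure X => ρ univ) dμ
    simp only [h3]
    simpa using this.symm
  have hfin : ∑ i, α i univ ≠ ⊤ := ne_top_of_le_ne_top ENNReal.one_ne_top (mν ▸ le_self_add)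
  have hr : νr univ = μr univ := (ENNReal.add_right_inj hfin).1 (mν.trans mμ.symm)
  have : IsFiniteMeasure νr := ⟨lt_of_le_of_lt (mν ▸ le_add_self) ENNReal.one_lt_top⟩
  have : IsFiniteMeasure μr := ⟨lt_of_le_of_lt (mμ ▸ le_add_self) ENNReal.one_lt_top⟩
  obtain ⟨γr, hγr⟩ := aux_coupling νr μr hr
  have hc : IsCoupling ((∑ i, γ i) + γr) ν μ := by
    constructor
    · rw [Measure.map_add _ _ measurable_fst, aux_map_sum _ _ measurable_fst, hγr.1]
      simp only [(hγ _).1]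
      exact dν.symm
    · rw [Measure.map_add _ _ measurable_snd, aux_map_sum _ _ measurable_snd, hγr.2]
      simp only [(hγ _).2]
      exact dμ.symm
  have hp : IsProbabilityMeasure ((∑ i, γ i) + γr) := by
    constructor
    have := hc.1
    rw [← preimage_univ (f := (Prod.fst : X × X → X)),
      ← Measure.map_apply measurable_fst MeasurableSet.univ, hc.1, measure_univ]
  have mom : ∀ (ρ : Measure X) (κ : ι → Measure X), (∀ i, κ i ≤ ρ.restrict (S i)) →
      ∫⁻ x, edist x x₀ ∂((∑ i, κ i) + ρ.restrict (⋃ i, S i)ᶜ) ≤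
      ∫⁻ x in (⋃ i, S i)ᶜ, edist x x₀ ∂ρ + H * ∑ i, κ i univ := by
    intro ρ κ hκ
    rw [lintegral_add_measure, lintegral_finsetSum_measure, add_comm, Finset.mul_sum]
    gcongr with i _
    exact aux_moment_le x₀ (nul ρ _ i (hκ i)) (hH i)
  have b1 : wCost 1 ν μ ≤ ∫⁻ q, edist q.1 q.2 ∂((∑ i, γ i) + γr) := by
    unfold wCost
    simp only [aux_cost]
    exact iInf₂_le _ ⟨hp, hc⟩
  refine b1.trans ?_
  rw [lintegral_add_measure, lintegral_finsetSum_measure]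
  refine add_le_add ?_ ((aux_cost_le_moments x₀ hγr).trans (add_le_add ?_ ?_))
  · calc ∑ i, ∫⁻ q, edist q.1 q.2 ∂(γ i) ≤ ∑ i, ε * α i univ := by
          gcongr with i _
          exact aux_cost_le_diam (hγ i) (hS i) (nul ν _ i (hαν i)) (nul μ _ i (hβμ i)) (hε i)
      _ = ε * ∑ i, α i univ := by rw [Finset.mul_sum]
      _ ≤ ε * 1 := by gcongr; exact mν ▸ le_self_add
      _ = ε := mul_one _
  · have := mom ν ν' hν'ν
    simpa only [h4] using this
  · have := mom μ μ' hμ'μ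
    simpa only [h5] using this

/-- The cost to a Dirac mass is the first moment. -/
lemma aux_dirac [MetricSpace X] [MeasurableSpace X] [BorelSpace X]
    [SecondCountableTopology X] (x₀ : X) (μ : Measure X) [IsProbabilityMeasure μ] :
    wCost 1 μ (Measure.dirac x₀) = ∫⁻ x, edist x x₀ ∂μ := by
  have hm : Measurable fun x : X => edist x x₀ := by fun_prop
  unfold wCost
  simp only [aux_cost]
  apply le_antisymm
  · have hc : IsCoupling (μ.prod (Measure.dirac x₀)) μ (Measure.dirac x₀) := by
      constructor
      · rw [Measure.map_fst_prod, measure_univ, one_smul]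
      · rw [Measure.map_snd_prod, measure_univ, one_smul]
    refine (iInf₂_le (μ.prod (Measure.dirac x₀)) ⟨inferInstance, hc⟩).trans ?_
    refine (aux_cost_le_moments x₀ hc).trans ?_
    simp
  · refine le_iInf₂ fun π hπ => ?_
    have h2 : ∀ᵐ q ∂π, q.2 = x₀ := by
      have : ∀ᵐ x ∂(π.map Prod.snd), x = x₀ := by
        rw [hπ.2.2]
        exact (ae_dirac_iff (p := fun x => x = x₀) (measurableSet_singleton x₀)).2 rfl
      exact ae_of_ae_map measurable_snd.aemeasurable this
    rw [← hπ.2.1, lintegral_map hm measurable_fst]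
    apply lintegral_mono_ae
    filter_upwards [h2] with q hq
    rw [hq]

lemma aux_mem_Pp [MetricSpace X] [MeasurableSpace X] (x₀ : X) (μ : Measure X) :
    μ ∈ Pp 1 x₀ ↔ IsProbabilityMeasure μ ∧ ∫⁻ x, edist x x₀ ∂μ < ⊤ := by
  unfold Pp FiniteMoment
  simp only [Real.rpow_one, ← edist_dist, mem_ofPred_eq, edist_comm x₀]

/-- Small partitions with null frontier. -/
lemma aux_partition [MetricSpace X] [MeasurableSpace X] [BorelSpace X] (μ : Measure X)
    [IsProbabilityMeasure μ] {K : Set X} (hK : IsCompact K) {δ : ℝ} (hδ : 0 < δ) :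
    ∃ (n : ℕ) (S : Fin n → Set X), (∀ i, MeasurableSet (S i)) ∧
      Pairwise (Function.onFun Disjoint S) ∧ (∀ i, μ (frontier (S i)) = 0) ∧
      K ⊆ ⋃ i, S i ∧ ∀ i, ∃ z ∈ K, S i ⊆ ball z δ := by
  choose r hr hr0 using fun z : X => exists_null_frontier_thickening μ {z} hδ
  simp only [thickening_singleton] at hr0
  obtain ⟨t, htK, ht⟩ := hK.elim_nhds_subcover (fun z => ball z (r z))
    (fun z _ => ball_mem_nhds z (hr z).1)
  let e := t.equivFin
  let B : Fin t.card → Set X := fun i => ball (e.symm i : X) (r (e.symm i))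
  refine ⟨t.card, disjointed B, ?_, disjoint_disjointed B, ?_, ?_, ?_⟩
  · intro i
    exact disjointedRec (p := fun s => MeasurableSet s)
      (fun s j hs => hs.diff measurableSet_ball) measurableSet_ball
  · intro i
    refine disjointedRec (p := fun s => μ (frontier s) = 0) (fun s j hs => ?_) (hr0 _)
    rw [sdiff_eq]
    refine null_frontier_inter hs ?_
    rw [frontier_compl]
    exact hr0 _
  · rw [iUnion_disjointed]
    intro x hx
    obtain ⟨z, hz, hxz⟩ := mem_iUnion₂.1 (ht hx)
    refine mem_iUnion.2 ⟨e ⟨z, hz⟩, ?_⟩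
    simpa [B] using hxz
  · intro i
    refine ⟨e.symm i, htK _ (e.symm i).2, (disjointed_subset B i).trans ?_⟩
    exact ball_subset_ball (hr _).2.le

/-- Measures with vanishing mass of first moment outside a fixed ball are precompact. -/
lemma aux_precompact [MetricSpace X] [MeasurableSpace X] [BorelSpace X] [ProperSpace X]
    (x₀ : X) (ν : ℕ → Measure X) (hν : ∀ n, IsProbabilityMeasure (ν n)) (C : ℝ≥0∞) (hC : C ≠ ⊤)
    (hb : ∀ n, ∫⁻ x, edist x x₀ ∂(ν n) ≤ C) (r : ℝ) (hr : 1 ≤ r)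
    (hlim : Tendsto (fun n => ∫⁻ x in (closedBall x₀ r)ᶜ, edist x x₀ ∂(ν n)) atTop (𝓝 0)) :
    ∃ μ ∈ Pp 1 x₀, ∃ φ : ℕ → ℕ, StrictMono φ ∧ WpTendsto 1 (fun j => ν (φ j)) μ := by
  have hm : Measurable fun x : X => edist x x₀ := by fun_prop
  let P : ℕ → ProbabilityMeasure X := fun n => ⟨ν n, hν n⟩
  have tight : IsTightMeasureSet {((μ : ProbabilityMeasure X) : Measure X) | μ ∈ range P} := by
    rw [isTightMeasureSet_iff_exists_isCompact_measure_compl_le]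
    intro ε hε
    by_cases hεT : ε = ⊤
    · exact ⟨∅, isCompact_empty, by simp [hεT]⟩
    refine ⟨closedBall x₀ (C / ε).toReal, isCompact_closedBall _ _, ?_⟩
    rintro _ ⟨_, ⟨n, rfl⟩, rfl⟩
    by_cases hC0 : C = 0
    · have h0 : ∫⁻ x, edist x x₀ ∂(ν n) = 0 := le_antisymm ((hb n).trans hC0.le) bot_le
      rw [lintegral_eq_zero_iff hm] at h0
      have : (ν n) (closedBall x₀ (C / ε).toReal)ᶜ = 0 := by
        refine measure_mono_null ?_ h0
        intro x hx hx'
        apply hx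
        have : x = x₀ := by simpa using hx'
        rw [this]
        exact mem_closedBall_self ENNReal.toReal_nonneg
      exact this.le.trans bot_le
    have hd0 : C / ε ≠ 0 := by simp [ENNReal.div_eq_zero_iff, hC0, hεT]
    have hdT : C / ε ≠ ⊤ := ENNReal.div_ne_top hC hε.ne'
    calc (ν n) (closedBall x₀ (C / ε).toReal)ᶜ ≤ (ν n) {x | C / ε ≤ edist x x₀} := by
          refine measure_mono fun x hx => ?_
          have hx : (C / ε).toReal < dist x x₀ := by simpa using hx
          rw [mem_ofPred_eq, edist_dist, ← ENNReal.ofReal_toReal hdT]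
          exact ENNReal.ofReal_le_ofReal hx.le
      _ ≤ (∫⁻ x, edist x x₀ ∂(ν n)) / (C / ε) :=
          meas_ge_le_lintegral_div hm.aemeasurable hd0 hdT
      _ ≤ C / (C / ε) := by gcongr; exact hb n
      _ = ε := by
          rw [ENNReal.div_div_cancel hC0 hC]
  have hcpt := isCompact_closure_of_isTightMeasureSet tight
  obtain ⟨μ, -, φ, hφ, hφlim⟩ := hcpt.tendsto_subseq (x := P)
    (fun n => subset_closure (mem_range_self n))
  have hlim' := hlim.comp hφ.tendsto_atTop
  have hout : ∀ x ∈ (closedBall x₀ r)ᶜ, (1 : ℝ≥0∞) ≤ edist x x₀ := by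
    intro x hx
    have hx : r < dist x x₀ := by simpa using hx
    rw [edist_dist, ← ENNReal.ofReal_one]
    exact ENNReal.ofReal_le_ofReal (hr.trans hx.le)
  have hmeasout : Tendsto (fun j => ((P ∘ φ) j : Measure X) (closedBall x₀ r)ᶜ) atTop (𝓝 0) := by
    refine tendsto_of_tendsto_of_tendsto_of_le_of_le tendsto_const_nhds hlim'
      (fun _ => bot_le) (fun j => ?_)
    change ν (φ j) (closedBall x₀ r)ᶜ ≤ ∫⁻ x in (closedBall x₀ r)ᶜ, edist x x₀ ∂(ν (φ j))
    rw [← setLIntegral_one]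
    exact setLIntegral_mono hm hout
  have hμ0 : (μ : Measure X) (closedBall x₀ r)ᶜ = 0 := by
    have := ProbabilityMeasure.le_liminf_measure_open_of_tendsto hφlim
      (G := (closedBall x₀ r)ᶜ) isClosed_closedBall.isOpen_compl
    rw [hmeasout.liminf_eq] at this
    exact le_antisymm this bot_le
  have hballH : ∀ x ∈ closedBall x₀ r, edist x x₀ ≤ ENNReal.ofReal r := by
    intro x hx
    rw [edist_dist]
    exact ENNReal.ofReal_le_ofReal hx
  refine ⟨μ, ?_, φ, hφ, ?_⟩
  · rw [aux_mem_Pp]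
    refine ⟨inferInstance, (aux_moment_le x₀ hμ0 hballH).trans_lt ?_⟩
    simp
  have key : Tendsto (fun j => wCost 1 (ν (φ j)) (μ : Measure X)) atTop (𝓝 0) := by
    rw [ENNReal.tendsto_nhds_zero]
    intro ε hε
    obtain ⟨δ, hδ0, hδ⟩ : ∃ δ : ℝ, 0 < δ ∧ ENNReal.ofReal (2 * δ) < ε := by
      obtain ⟨a, ha0, ha⟩ := ENNReal.lt_iff_exists_nnreal_btwn.1 hε
      refine ⟨(a : ℝ) / 2, ?_, ?_⟩
      · have : 0 < (a : ℝ) := by exact_mod_cast ha0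
        positivity
      · rw [mul_div_cancel₀ _ two_ne_zero, ENNReal.ofReal_coe_nnreal]
        exact ha
    obtain ⟨k, S, hS, hd, hfr, hcov, hz⟩ := aux_partition (μ : Measure X)
      (isCompact_closedBall x₀ r) hδ0
    have hε' : ∀ i, ∀ x ∈ S i, ∀ y ∈ S i, edist x y ≤ ENNReal.ofReal (2 * δ) := by
      intro i x hx y hy
      obtain ⟨z, -, hz⟩ := hz i
      rw [edist_dist]
      apply ENNReal.ofReal_le_ofReal
      have h1 := mem_ball.1 (hz hx)
      have h2 := mem_ball.1 (hz hy)
      linarith [dist_triangle_right x y z]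
    have hH' : ∀ i, ∀ x ∈ S i, edist x x₀ ≤ ENNReal.ofReal (r + δ) := by
      intro i x hx
      obtain ⟨z, hzK, hz⟩ := hz i
      rw [edist_dist]
      apply ENNReal.ofReal_le_ofReal
      have h1 := mem_ball.1 (hz hx)
      have h2 := mem_closedBall.1 hzK
      linarith [dist_triangle x z x₀]
    have hSl : ∀ i, Tendsto (fun j => ν (φ j) (S i)) atTop (𝓝 ((μ : Measure X) (S i))) := fun i =>
      ProbabilityMeasure.tendsto_measure_of_null_frontier_of_tendsto' hφlim (hfr i)
    have hUK : (⋃ i, S i)ᶜ ⊆ (closedBall x₀ r)ᶜ := compl_subset_compl.2 hcov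
    have hμU : ∫⁻ x in (⋃ i, S i)ᶜ, edist x x₀ ∂(μ : Measure X) = 0 := by
      rw [Measure.restrict_eq_zero.2 (measure_mono_null hUK hμ0), lintegral_zero_measure]
    have T1 : Tendsto (fun j => ∫⁻ x in (⋃ i, S i)ᶜ, edist x x₀ ∂(ν (φ j))) atTop (𝓝 0) :=
      tendsto_of_tendsto_of_tendsto_of_le_of_le tendsto_const_nhds hlim'
        (fun _ => bot_le) (fun j => lintegral_mono_set hUK)
    have T2 : Tendsto (fun j => ∑ i, (ν (φ j) (S i) - (μ : Measure X) (S i))) atTop (𝓝 0) := by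
      have := tendsto_finsetSum Finset.univ (fun i _ =>
        ENNReal.Tendsto.sub (hSl i) (tendsto_const_nhds (x := (μ : Measure X) (S i)))
          (Or.inl (measure_ne_top _ _)))
      simpa using this
    have T3 : Tendsto (fun j => ∑ i, ((μ : Measure X) (S i) - ν (φ j) (S i))) atTop (𝓝 0) := by
      have := tendsto_finsetSum Finset.univ (fun i _ =>
        ENNReal.Tendsto.sub (tendsto_const_nhds (x := (μ : Measure X) (S i))) (hSl i)
          (Or.inl (measure_ne_top _ _)))
      simpa using this
    have T : Tendsto (fun j => ENNReal.ofReal (2 * δ) +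
        ((∫⁻ x in (⋃ i, S i)ᶜ, edist x x₀ ∂(ν (φ j)) +
          ENNReal.ofReal (r + δ) * ∑ i, (ν (φ j) (S i) - (μ : Measure X) (S i))) +
        (∫⁻ x in (⋃ i, S i)ᶜ, edist x x₀ ∂(μ : Measure X) +
          ENNReal.ofReal (r + δ) * ∑ i, ((μ : Measure X) (S i) - ν (φ j) (S i)))))
        atTop (𝓝 (ENNReal.ofReal (2 * δ))) := by
      have a2 := ENNReal.Tendsto.const_mul (a := ENNReal.ofReal (r + δ)) T2
        (Or.inr ENNReal.ofReal_ne_top)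
      have a3 := ENNReal.Tendsto.const_mul (a := ENNReal.ofReal (r + δ)) T3
        (Or.inr ENNReal.ofReal_ne_top)
      have := (tendsto_const_nhds (x := ENNReal.ofReal (2 * δ))).add
        ((T1.add a2).add (a3.const_add 0))
      rw [hμU]
      simpa using this
    filter_upwards [T.eventually_lt_const hδ] with j hj
    have := hν (φ j)
    exact (aux_main x₀ (ν (φ j)) (μ : Measure X) S hS hd hε' hH').trans hj.le
  unfold WpTendsto Wp
  have := (ENNReal.tendsto_toReal ENNReal.zero_ne_top).comp key
  simpa [Function.comp_def] using this

lemma aux_iter_map [MeasurableSpace X] (f : X → X) (hf : Measurable f) (μ : Measure X) (k : ℕ) :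
    (fun μ : Measure X => μ.map f)^[k] μ = μ.map f^[k] := by
  induction k with
  | zero => simp
  | succ k ih =>
    rw [Function.iterate_succ_apply', ih, Function.iterate_succ',
      Measure.map_map hf (hf.iterate k)]

lemma aux_contr [MetricSpace X] (x₀ : X) (g : X → X) (R₀ c : ℝ) (hR₀ : 0 ≤ R₀) (hc0 : 0 ≤ c)
    (hc1 : c < 1) (h : ∀ R : ℝ, R₀ ≤ R → ∀ x ∈ closedBall x₀ R, g x ∈ closedBall x₀ (c * R))
    (x : X) (q : ℕ) : dist (g^[q] x) x₀ ≤ R₀ + c ^ q * dist x x₀ := by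
  induction q with
  | zero => simpa using hR₀
  | succ q ih =>
    rw [Function.iterate_succ_apply']
    have hp : 0 ≤ c ^ q * dist x x₀ := by positivity
    have := h (R₀ + c ^ q * dist x x₀) (by linarith) _ (mem_closedBall.2 ih)
    have := mem_closedBall.1 this
    rw [pow_succ]
    nlinarith

/-- If some iterate `f^m` contracts all large closed balls around `x₀` by a factor `c < 1`,
then every bounded `w₁`-closed subset of `P₁(X)` is `f_*`-admissible. -/
theorem exponential_contraction_implies_admissible
    [MetricSpace X] [MeasurableSpace X] [BorelSpace X] [ProperSpace X] [CompleteSpace X]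
    [TopologicalSpace.SeparableSpace X] (x₀ : X) (f : X → X) (hf : Continuous f)
    (hmap : ∀ μ ∈ Pp 1 x₀, μ.map f ∈ Pp 1 x₀)
    (hcont : ∀ (μs : ℕ → Measure X) (μ : Measure X), (∀ n, μs n ∈ Pp 1 x₀) → μ ∈ Pp 1 x₀ →
      WpTendsto 1 μs μ → WpTendsto 1 (fun n => (μs n).map f) (μ.map f))
    (R₀ c : ℝ) (hR₀ : 0 ≤ R₀) (hc0 : 0 ≤ c) (hc1 : c < 1) (m : ℕ) (hm : 0 < m)
    (hcontr : ∀ R : ℝ, R₀ ≤ R → ∀ x ∈ Metric.closedBall x₀ R,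
      f^[m] x ∈ Metric.closedBall x₀ (c * R)) :
    ∀ N : Set (Measure X), WpClosed 1 x₀ N → WpBounded 1 x₀ N →
      WpAdmissible 1 x₀ (fun μ : Measure X => μ.map f) N := by
  intro N hN hNb
  obtain ⟨hNP, -⟩ := hN
  obtain ⟨R, hR⟩ := hNb
  have hfm : Measurable f := hf.measurable
  have hbd : ∀ μ ∈ N, ∫⁻ x, edist x x₀ ∂μ ≤ ENNReal.ofReal R := by
    intro μ hμ
    obtain ⟨hp, hfin⟩ := (aux_mem_Pp x₀ μ).1 (hNP hμ)
    have h := hR μ hμ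
    unfold Wp at h
    rw [aux_dirac, div_one, ENNReal.rpow_one] at h
    rw [← ENNReal.ofReal_toReal hfin.ne]
    exact ENNReal.ofReal_le_ofReal h
  intro μs M hM hseg
  have hseg' : ∀ n, ∀ k ≤ M n, (μs n).map f^[k] ∈ N := by
    intro n k hk
    rw [← aux_iter_map f hfm]
    exact hseg n k hk
  have hend : ∀ n, (μs n).map f^[M n] ∈ N := fun n => hseg' n _ le_rfl
  have main := aux_precompact x₀ (fun n => (μs n).map f^[M n])
    (fun n => ((aux_mem_Pp x₀ _).1 (hNP (hend n))).1) (ENNReal.ofReal R) ENNReal.ofReal_ne_top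
    (fun n => hbd _ (hend n)) (R₀ + 1) (by linarith) ?_
  · obtain ⟨μ, hμ, φ, hφ, hlim⟩ := main
    refine ⟨μ, hμ, φ, hφ, ?_⟩
    simp only [aux_iter_map f hfm]
    exact hlim
  have hm' : Measurable fun x : X => edist x x₀ := by fun_prop
  have est : ∀ n, ∫⁻ x in (closedBall x₀ (R₀ + 1))ᶜ, edist x x₀ ∂((μs n).map f^[M n]) ≤
      ENNReal.ofReal ((R₀ + 1) * c ^ (M n / m)) * ENNReal.ofReal R := by
    intro n
    have hsplit : (μs n).map f^[M n] = ((μs n).map f^[M n % m]).map ((f^[m])^[M n / m]) := by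
      rw [Measure.map_map ((hfm.iterate m).iterate _) (hfm.iterate _), ← Function.iterate_mul,
        ← Function.iterate_add, Nat.div_add_mod]
    have hgm : Measurable ((f^[m])^[M n / m]) := (hfm.iterate m).iterate _
    have hKm : MeasurableSet (closedBall x₀ (R₀ + 1))ᶜ := measurableSet_closedBall.compl
    rw [hsplit, setLIntegral_map hKm hm' hgm]
    calc ∫⁻ x in (f^[m])^[M n / m] ⁻¹' (closedBall x₀ (R₀ + 1))ᶜ,
          edist ((f^[m])^[M n / m] x) x₀ ∂((μs n).map f^[M n % m])
        ≤ ∫⁻ x in (f^[m])^[M n / m] ⁻¹' (closedBall x₀ (R₀ + 1))ᶜ,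
          ENNReal.ofReal ((R₀ + 1) * c ^ (M n / m)) * edist x x₀ ∂((μs n).map f^[M n % m]) := by
          refine setLIntegral_mono (by fun_prop) fun x hx => ?_
          have hx : R₀ + 1 < dist ((f^[m])^[M n / m] x) x₀ := by simpa using hx
          have h2 := aux_contr x₀ (f^[m]) R₀ c hR₀ hc0 hc1 hcontr x (M n / m)
          rw [edist_dist, edist_dist, ← ENNReal.ofReal_mul (by positivity)]
          apply ENNReal.ofReal_le_ofReal
          nlinarith
      _ ≤ ∫⁻ x, ENNReal.ofReal ((R₀ + 1) * c ^ (M n / m)) * edist x x₀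
            ∂((μs n).map f^[M n % m]) := setLIntegral_le_lintegral _ _
      _ = ENNReal.ofReal ((R₀ + 1) * c ^ (M n / m)) *
            ∫⁻ x, edist x x₀ ∂((μs n).map f^[M n % m]) := lintegral_const_mul _ hm'
      _ ≤ _ := by
          gcongr
          exact hbd _ (hseg' n _ (Nat.mod_le _ _))
  refine tendsto_of_tendsto_of_tendsto_of_le_of_le tendsto_const_nhds ?_ (fun _ => bot_le) est
  have hq : Tendsto (fun n => M n / m) atTop atTop :=
    (Nat.tendsto_div_const_atTop hm.ne').comp hM
  have hpow := ((tendsto_pow_atTop_nhds_zero_of_lt_one hc0 hc1).comp hq).const_mul (R₀ + 1)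
  have h1 := ENNReal.tendsto_ofReal hpow
  have h2 := ENNReal.Tendsto.mul_const (b := ENNReal.ofReal R) h1 (Or.inr ENNReal.ofReal_ne_top)
  simpa [Function.comp_def] using h2
end
end

section
/- Let (X,d) be a proper complete separable metric space and f: X -> X continuous such that the pushforward f_* is a w_1-continuous self-map of P_1(X). Let B be a closed bounded subset of (P_1(X), w_1), let U be a delta-neighborhood of B (for some delta > 0) whose closure is f_*-admissible, and suppose f_* is uniformly w_1-continuous on U. If F_n: P_1(X) -> P_1(X) are continuous maps converging to f_* uniformly on U, i.e. sup over mu in U of w_1(f_*(mu), F_n(mu)) tends to 0 as n -> infinity, then B is {F_n}-admissible. -/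
open MeasureTheory Topology Filter Metric Set
open scoped ENNReal NNReal

noncomputable section

variable {X : Type*}

lemma wCost_self_aux [MetricSpace X] [MeasurableSpace X] [BorelSpace X]
    [SecondCountableTopology X] (μ : Measure X) [IsProbabilityMeasure μ] :
    wCost 1 μ μ = 0 := by
  have hm : Measurable (fun x : X => (x, x)) := measurable_id.prodMk measurable_id
  refine le_antisymm ?_ bot_le
  unfold wCost
  refine iInf₂_le_of_le (μ.map (fun x => (x, x))) ⟨Measure.isProbabilityMeasure_map hm.aemeasurable, ?_, ?_⟩ ?_
  · rw [Measure.map_map measurable_fst hm]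
    exact Measure.map_id
  · rw [Measure.map_map measurable_snd hm]
    exact Measure.map_id
  · rw [lintegral_map (by fun_prop) hm]
    simp

lemma wCost_lt_top_aux [MetricSpace X] [MeasurableSpace X] [BorelSpace X]
    [SecondCountableTopology X] (x₀ : X) {μ ν : Measure X} (hμ : μ ∈ Pp 1 x₀)
    (hν : ν ∈ Pp 1 x₀) : wCost 1 μ ν < ⊤ := by
  obtain ⟨hμ1, hμ2⟩ := hμ
  obtain ⟨hν1, hν2⟩ := hν
  unfold FiniteMoment at hμ2 hν2
  have : wCost 1 μ ν ≤ ∫⁻ q, ENNReal.ofReal (dist q.1 q.2 ^ (1:ℝ)) ∂(μ.prod ν) := by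
    unfold wCost
    refine iInf₂_le (μ.prod ν) ⟨inferInstance, ?_, ?_⟩
    · simp
    · simp
  refine this.trans_lt ?_
  calc ∫⁻ q, ENNReal.ofReal (dist q.1 q.2 ^ (1:ℝ)) ∂(μ.prod ν)
      ≤ ∫⁻ q, (ENNReal.ofReal (dist x₀ q.1 ^ (1:ℝ)) + ENNReal.ofReal (dist x₀ q.2 ^ (1:ℝ)))
          ∂(μ.prod ν) := by
        refine lintegral_mono fun q => ?_
        simp only [Real.rpow_one]
        rw [← ENNReal.ofReal_add dist_nonneg dist_nonneg]
        exact ENNReal.ofReal_le_ofReal (dist_triangle_left _ _ _)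
    _ = ∫⁻ x, ENNReal.ofReal (dist x₀ x ^ (1:ℝ)) ∂μ
        + ∫⁻ x, ENNReal.ofReal (dist x₀ x ^ (1:ℝ)) ∂ν := by
        simp only [Real.rpow_one]
        rw [lintegral_add_left (by fun_prop)]
        congr 1
        · have := lintegral_map (μ := μ.prod ν) (f := fun x => ENNReal.ofReal (dist x₀ x))
            (by fun_prop) measurable_fst
          rw [← this]; simp
        · have := lintegral_map (μ := μ.prod ν) (f := fun x => ENNReal.ofReal (dist x₀ x))
            (by fun_prop) measurable_snd
          rw [← this]; simp
    _ < ⊤ := ENNReal.add_lt_top.2 ⟨hμ2, hν2⟩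

lemma glue_aux [MeasurableSpace X] [StandardBorelSpace X] [Nonempty X]
    {μ ν ρ : Measure X} {π₁ π₂ : Measure (X × X)} [IsProbabilityMeasure π₁]
    [IsProbabilityMeasure π₂] (h₁ : IsCoupling π₁ μ ν) (h₂ : IsCoupling π₂ ν ρ) :
    ∃ γ : Measure ((X × X) × X), IsProbabilityMeasure γ ∧ γ.map Prod.fst = π₁ ∧
      γ.map (fun q => (q.1.2, q.2)) = π₂ := by
  refine ⟨π₁.compProd (π₂.condKernel.comap Prod.snd measurable_snd), inferInstance, ?_, ?_⟩
  · exact Measure.fst_compProd _ _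
  · have hfst : π₂.fst = π₁.map Prod.snd := by
      rw [h₁.2]; exact h₂.1
    have hm : Measurable (fun q : (X × X) × X => (q.1.2, q.2)) := by fun_prop
    conv_rhs => rw [← π₂.disintegrate π₂.condKernel, hfst]
    refine Measure.ext_of_lintegral _ fun g hg => ?_
    have : IsProbabilityMeasure (π₁.map Prod.snd) :=
      Measure.isProbabilityMeasure_map measurable_snd.aemeasurable
    rw [lintegral_map hg hm, Measure.lintegral_compProd (show Measurable (fun q : (X × X) × X => g (q.1.2, q.2)) from hg.comp hm),
      Measure.lintegral_compProd hg, lintegral_map _ measurable_snd]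
    · simp
    · exact hg.lintegral_kernel_prod_right'

lemma wCost_triangle_aux [MetricSpace X] [MeasurableSpace X] [BorelSpace X]
    [SecondCountableTopology X] [CompleteSpace X] [Nonempty X] (μ ν ρ : Measure X) :
    wCost 1 μ ρ ≤ wCost 1 μ ν + wCost 1 ν ρ := by
  have : PolishSpace X := inferInstance
  rw [wCost, wCost, wCost]
  refine ENNReal.le_of_forall_pos_le_add fun η hη hfin => ?_
  have hη2 : (0 : ℝ≥0∞) < (η / 2 : ℝ≥0) := by
    exact_mod_cast half_pos hη
  obtain ⟨hf1, hf2⟩ := ENNReal.add_lt_top.1 hfin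
  obtain ⟨π₁, hπ₁⟩ := iInf_lt_iff.1 (ENNReal.lt_add_right hf1.ne hη2.ne')
  obtain ⟨⟨hp₁, hc₁⟩, hπ₁⟩ := iInf_lt_iff.1 hπ₁
  obtain ⟨π₂, hπ₂⟩ := iInf_lt_iff.1 (ENNReal.lt_add_right hf2.ne hη2.ne')
  obtain ⟨⟨hp₂, hc₂⟩, hπ₂⟩ := iInf_lt_iff.1 hπ₂
  obtain ⟨γ, hγ, g₁, g₂⟩ := glue_aux hc₁ hc₂
  have hm : Measurable (fun q : (X × X) × X => (q.1.1, q.2)) := by fun_prop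
  have hm2 : Measurable (fun q : (X × X) × X => (q.1.2, q.2)) := by fun_prop
  refine iInf₂_le_of_le (γ.map (fun q => (q.1.1, q.2)))
    ⟨Measure.isProbabilityMeasure_map hm.aemeasurable, ?_, ?_⟩ ?_
  · rw [Measure.map_map measurable_fst hm, ← hc₁.1, ← g₁,
      Measure.map_map measurable_fst measurable_fst]
    rfl
  · rw [Measure.map_map measurable_snd hm, ← hc₂.2, ← g₂,
      Measure.map_map measurable_snd hm2]
    rfl
  · rw [lintegral_map (by fun_prop) hm]
    calc _ ≤ ∫⁻ q, (ENNReal.ofReal (dist q.1.1 q.1.2 ^ (1:ℝ))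
            + ENNReal.ofReal (dist q.1.2 q.2 ^ (1:ℝ))) ∂γ := by
          refine lintegral_mono fun q => ?_
          simp only [Real.rpow_one]
          rw [← ENNReal.ofReal_add dist_nonneg dist_nonneg]
          exact ENNReal.ofReal_le_ofReal (dist_triangle _ _ _)
      _ = ∫⁻ q, ENNReal.ofReal (dist q.1 q.2 ^ (1:ℝ)) ∂π₁
          + ∫⁻ q, ENNReal.ofReal (dist q.1 q.2 ^ (1:ℝ)) ∂π₂ := by
          rw [lintegral_add_left (by fun_prop), ← g₁, ← g₂, lintegral_map (by fun_prop) hm2,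
            lintegral_map (by fun_prop) measurable_fst]
      _ ≤ _ := add_le_add hπ₁.le hπ₂.le
      _ = _ := by
          rw [add_add_add_comm]
          congr 1
          exact_mod_cast add_halves η

lemma Wp_one_aux [MetricSpace X] [MeasurableSpace X] (μ ν : Measure X) :
    Wp 1 μ ν = (wCost 1 μ ν).toReal := by
  simp [Wp]

lemma Wp_triangle_aux [MetricSpace X] [MeasurableSpace X] [BorelSpace X]
    [SecondCountableTopology X] [CompleteSpace X] (x₀ : X) {μ ν ρ : Measure X}
    (hμ : μ ∈ Pp 1 x₀) (hν : ν ∈ Pp 1 x₀) (hρ : ρ ∈ Pp 1 x₀) :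
    Wp 1 μ ρ ≤ Wp 1 μ ν + Wp 1 ν ρ := by
  have : Nonempty X := ⟨x₀⟩
  simp only [Wp_one_aux]
  have h1 := (wCost_lt_top_aux x₀ hμ hν).ne
  have h2 := (wCost_lt_top_aux x₀ hν hρ).ne
  rw [← ENNReal.toReal_add h1 h2]
  exact ENNReal.toReal_mono (ENNReal.add_ne_top.2 ⟨h1, h2⟩) (wCost_triangle_aux _ _ _)

lemma Wp_symm_aux [MetricSpace X] [MeasurableSpace X] [BorelSpace X]
    [SecondCountableTopology X] (μ ν : Measure X) : Wp 1 μ ν = Wp 1 ν μ := by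
  have key : ∀ μ ν : Measure X, wCost 1 μ ν ≤ wCost 1 ν μ := by
    intro μ ν
    rw [wCost, wCost]
    refine le_iInf₂ fun π hπ => ?_
    obtain ⟨hp, hc⟩ := hπ
    refine iInf₂_le_of_le (π.map Prod.swap)
      ⟨Measure.isProbabilityMeasure_map measurable_swap.aemeasurable, ?_, ?_⟩ ?_
    · rw [Measure.map_map measurable_fst measurable_swap, ← hc.2]; rfl
    · rw [Measure.map_map measurable_snd measurable_swap, ← hc.1]; rfl
    · rw [lintegral_map (by fun_prop) measurable_swap]
      simp [dist_comm]
  rw [Wp_one_aux, Wp_one_aux, le_antisymm (key μ ν) (key ν μ)]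

/-- If `B ⊆ P₁(X)` is closed and bounded, `U` is a `δ`-neighborhood of `B` whose closure is
`f_*`-admissible, `f_*` is uniformly `w₁`-continuous on `U`, and `Fₙ → f_*` uniformly on
`U`, then `B` is `{Fₙ}`-admissible. -/
theorem uniform_perturbation_admissible
    [MetricSpace X] [MeasurableSpace X] [BorelSpace X] [ProperSpace X] [CompleteSpace X]
    [TopologicalSpace.SeparableSpace X] (x₀ : X) (f : X → X) (hf : Continuous f)
    (hmap : ∀ μ ∈ Pp 1 x₀, μ.map f ∈ Pp 1 x₀)
    (hcont : ∀ (μs : ℕ → Measure X) (μ : Measure X), (∀ n, μs n ∈ Pp 1 x₀) → μ ∈ Pp 1 x₀ →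
      WpTendsto 1 μs μ → WpTendsto 1 (fun n => (μs n).map f) (μ.map f))
    (B : Set (Measure X)) (hB_closed : WpClosed 1 x₀ B) (hB_bdd : WpBounded 1 x₀ B)
    (δ : ℝ) (hδ : 0 < δ)
    (U : Set (Measure X))
    (hU : U = {μ : Measure X | μ ∈ Pp 1 x₀ ∧ ∃ ν ∈ B, Wp 1 μ ν < δ})
    (hU_adm : WpAdmissible 1 x₀ (fun μ : Measure X => μ.map f) (WpClosure 1 x₀ U))
    (hunif : ∀ ε : ℝ, 0 < ε → ∃ d : ℝ, 0 < d ∧ ∀ μ ∈ U, ∀ ν ∈ U,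
      Wp 1 μ ν < d → Wp 1 (μ.map f) (ν.map f) < ε)
    (F : ℕ → Measure X → Measure X)
    (hFmap : ∀ n, ∀ μ ∈ Pp 1 x₀, F n μ ∈ Pp 1 x₀)
    (hFcont : ∀ n, ∀ (μs : ℕ → Measure X) (μ : Measure X), (∀ k, μs k ∈ Pp 1 x₀) →
      μ ∈ Pp 1 x₀ → WpTendsto 1 μs μ → WpTendsto 1 (fun k => F n (μs k)) (F n μ))
    (ε : ℕ → ℝ) (hε : Tendsto ε atTop (𝓝 0))
    (hFconv : ∀ n, ∀ μ ∈ U, Wp 1 (μ.map f) (F n μ) ≤ ε n) :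
    WpSeqAdmissible 1 x₀ F B := by
  have : SecondCountableTopology X := inferInstance
  intro μs m hm horb
  have hself : ∀ μ ∈ Pp 1 x₀, Wp 1 μ μ = 0 := by
    intro μ hμ
    have := hμ.1
    rw [Wp_one_aux, wCost_self_aux]; rfl
  have hBP := hB_closed.1
  have hUm : ∀ μ, μ ∈ U ↔ μ ∈ Pp 1 x₀ ∧ ∃ ν ∈ B, Wp 1 μ ν < δ := by
    intro μ; rw [hU]; rfl
  have hBU : B ⊆ U := fun μ hμ => (hUm μ).2 ⟨hBP hμ, μ, hμ, by rw [hself μ (hBP hμ)]; exact hδ⟩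
  have hit : ∀ (k : ℕ), ∀ y ∈ Pp 1 x₀, (fun μ : Measure X => μ.map f)^[k] y ∈ Pp 1 x₀ := by
    intro k
    induction k with
    | zero => intro y hy; exact hy
    | succ k ih => intro y hy; rw [Function.iterate_succ_apply']; exact hmap _ (ih y hy)
  -- shadowing for one index
  have shadow : ∀ (k : ℕ) (η : ℝ), 0 < η → ∀ᶠ n in atTop, ∀ y : Measure X,
      (∀ j ≤ k, (F n)^[j] y ∈ B) →
      Wp 1 ((fun μ : Measure X => μ.map f)^[k] y) ((F n)^[k] y) < η := by
    intro k
    induction k with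
    | zero =>
      intro η hη
      refine Eventually.of_forall fun n y hy => ?_
      have := hy 0 le_rfl
      simp only [Function.iterate_zero, id] at this ⊢
      rw [hself y (hBP this)]; exact hη
    | succ k ih =>
      intro η hη
      obtain ⟨d, hd, hdU⟩ := hunif (η / 2) (half_pos hη)
      filter_upwards [ih (min d δ) (lt_min hd hδ), hε.eventually (gt_mem_nhds (half_pos hη))]
        with n hn hεn y hy
      have h1 := hn y (fun j hj => hy j (hj.trans k.le_succ))
      have hFB := hy k k.le_succ
      have hyP : y ∈ Pp 1 x₀ := hBP (hy 0 (Nat.zero_le _))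
      have hfU : (fun μ : Measure X => μ.map f)^[k] y ∈ U :=
        (hUm _).2 ⟨hit k y hyP, _, hFB, h1.trans_le (min_le_right _ _)⟩
      have h2 := hdU _ hfU _ (hBU hFB) (h1.trans_le (min_le_left _ _))
      have h3 := hFconv n _ (hBU hFB)
      rw [Function.iterate_succ_apply', Function.iterate_succ_apply']
      have h4 := Wp_triangle_aux x₀ (hmap _ (hit k y hyP)) (hmap _ (hBP hFB))
        (hFmap n _ (hBP hFB))
      linarith
  have shadow' : ∀ k : ℕ, ∀ᶠ n in atTop, k ≤ m n ∧ ∀ i ≤ k, ∀ y : Measure X,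
      (∀ j ≤ k, (F n)^[j] y ∈ B) →
      Wp 1 ((fun μ : Measure X => μ.map f)^[i] y) ((F n)^[i] y) < min δ (1 / ((k : ℝ) + 1)) := by
    intro k
    have hpos : 0 < min δ (1 / ((k : ℝ) + 1)) := lt_min hδ (by positivity)
    refine (hm.eventually_ge_atTop k).and ?_
    have := (Set.finite_Iic k).eventually_all (l := atTop) (p := fun i n => ∀ y : Measure X,
      (∀ j ≤ i, (F n)^[j] y ∈ B) →
      Wp 1 ((fun μ : Measure X => μ.map f)^[i] y) ((F n)^[i] y) < min δ (1 / ((k : ℝ) + 1)))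
    filter_upwards [this.2 (fun i _ => shadow i _ hpos)] with n hn i hi y hy
    exact hn i hi y (fun j hj => hy j (hj.trans hi))
  obtain ⟨φ, hφ, hφP⟩ := extraction_forall_of_eventually shadow'
  let y : ℕ → Measure X := fun k => (F (φ k))^[m (φ k) - k] (μs (φ k))
  have hyF : ∀ k i, (F (φ k))^[i] (y k) = (F (φ k))^[i + (m (φ k) - k)] (μs (φ k)) := by
    intro k i
    rw [Function.iterate_add_apply]
  have hyB : ∀ k, ∀ j ≤ k, (F (φ k))^[j] (y k) ∈ B := by
    intro k j hj
    rw [hyF]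
    have := (hφP k).1
    exact horb _ _ (by omega)
  have hyP : ∀ k, y k ∈ Pp 1 x₀ := fun k => hBP (hyB k 0 (Nat.zero_le _))
  obtain ⟨μ, hμ, ψ, hψ, hlim⟩ := hU_adm y id tendsto_id (by
    intro k j hj
    have hU' : (fun μ : Measure X => μ.map f)^[j] (y k) ∈ U :=
      (hUm _).2 ⟨hit j _ (hyP k), _, hyB k j hj,
        ((hφP k).2 j hj _ (hyB k)).trans_le (min_le_left _ _)⟩
    refine ⟨hit j _ (hyP k), fun _ => _, fun _ => hU', ?_⟩
    unfold WpTendsto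
    have h0 := hself _ (hit j _ (hyP k))
    exact tendsto_const_nhds.congr fun _ => h0.symm)
  refine ⟨μ, hμ, φ ∘ ψ, hφ.comp hψ, ?_⟩
  unfold WpTendsto at hlim ⊢
  have hz : Tendsto (fun j => 1 / ((ψ j : ℝ) + 1)) atTop (𝓝 0) :=
    tendsto_one_div_add_atTop_nhds_zero_nat.comp hψ.tendsto_atTop
  have hsum := hz.add hlim
  rw [add_zero] at hsum
  refine squeeze_zero (fun j => ENNReal.toReal_nonneg) (fun j => ?_) hsum
  have hend : (F (φ (ψ j)))^[m (φ (ψ j))] (μs (φ (ψ j))) = (F (φ (ψ j)))^[ψ j] (y (ψ j)) := by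
    rw [hyF, Nat.add_sub_cancel' (hφP (ψ j)).1]
  simp only [Function.comp_apply, id]
  rw [hend]
  have hB' := hyB (ψ j) (ψ j) le_rfl
  have ht := Wp_triangle_aux x₀ (hBP hB') (hit (ψ j) _ (hyP (ψ j))) hμ
  refine ht.trans (add_le_add ?_ le_rfl)
  rw [Wp_symm_aux]
  exact (((hφP (ψ j)).2 (ψ j) le_rfl _ (hyB (ψ j))).trans_le (min_le_right _ _)).le
end
end
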